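/- arXiv:2209.08870 — 11 statements merged into one kernel-verified Lean document; each statement's English description precedes it below -/
import Mathlib

section
/- Let A be a unital C*-algebra, q ∈ (0,1) a real number, and a ∈ A an element satisfying a*a = q²·a a* + (1−q²)·1. Then ‖a‖ = 1. -/
/-- In a (nonzero) unital C*-algebra, if `a* a = q² a a* + (1-q²) 1` with `q ∈ (0,1)`,
then `‖a‖ = 1`. -/
theorem norm_eq_one_of_qSphere_relation {A : Type*} [NormedRing A] [StarRing A] [CStarRing A]
    [NormedAlgebra ℂ A] [CompleteSpace A] [Nontrivial A]
    (q : ℝ) (hq : q ∈ Set.Ioo (0 : ℝ) 1) (a : A)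
    (h : star a * a = ((q : ℂ) ^ 2) • (a * star a) + (1 - (q : ℂ) ^ 2) • (1 : A)) :
    ‖a‖ = 1 := by
  obtain ⟨hq0, hq1⟩ := hq
  have hqc : (q : ℂ) ^ 2 ≠ 0 := by
    have : (q : ℂ) ≠ 0 := by exact_mod_cast hq0.ne'
    exact pow_ne_zero 2 this
  have hq2 : 0 < q ^ 2 := by positivity
  have hq21 : q ^ 2 < 1 := by nlinarith
  have hnq : ‖(q : ℂ) ^ 2‖ = q ^ 2 := by simp
  have hnq' : ‖1 - (q : ℂ) ^ 2‖ = 1 - q ^ 2 := by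
    have : (1 - (q : ℂ) ^ 2) = ((1 - q ^ 2 : ℝ) : ℂ) := by push_cast; rfl
    rw [this, Complex.norm_real, Real.norm_eq_abs, abs_of_pos (by linarith)]
  have h1 : ‖(1 : A)‖ = 1 := CStarRing.norm_one
  have : NormOneClass A := ⟨h1⟩
  have hT : ‖a * star a‖ = ‖a‖ * ‖a‖ := CStarRing.norm_self_mul_star
  have hub : ‖a‖ * ‖a‖ ≤ 1 := by
    have e : ‖a‖ * ‖a‖ ≤ q ^ 2 * (‖a‖ * ‖a‖) + (1 - q ^ 2) := by
      calc ‖a‖ * ‖a‖ = ‖star a * a‖ := CStarRing.norm_star_mul_self.symm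
        _ ≤ ‖((q : ℂ) ^ 2) • (a * star a)‖ + ‖(1 - (q : ℂ) ^ 2) • (1 : A)‖ := by
            rw [h]; exact norm_add_le _ _
        _ = _ := by rw [norm_smul, norm_smul, hnq, hnq', hT, h1, mul_one]
    nlinarith
  -- affine relation between the two spectra
  have key : ∀ l : ℂ, (q : ℂ) ^ 2 * l + (1 - (q : ℂ) ^ 2) ∈ spectrum ℂ (star a * a) ↔
      l ∈ spectrum ℂ (a * star a) := by
    intro l
    rw [spectrum.mem_iff, spectrum.mem_iff]
    have : algebraMap ℂ A ((q : ℂ) ^ 2 * l + (1 - (q : ℂ) ^ 2)) - star a * a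
        = (Units.mk0 _ hqc) • (algebraMap ℂ A l - a * star a) := by
      rw [h, Units.smul_def, Units.val_mk0, Algebra.algebraMap_eq_smul_one,
        Algebra.algebraMap_eq_smul_one]
      module
    rw [this, isUnit_smul_iff]
  have comm : ∀ l : ℂ, l ≠ 0 → (l ∈ spectrum ℂ (star a * a) ↔ l ∈ spectrum ℂ (a * star a)) := by
    intro l hl
    have := spectrum.nonzero_mul_comm (𝕜 := ℂ) (star a) a
    have := Set.ext_iff.1 this l
    simpa [hl] using this
  have hne : (spectrum ℂ (a * star a)).Nonempty := spectrum.nonempty _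
  have hc : IsCompact (spectrum ℂ (a * star a)) := spectrum.isCompact _
  have hcont : ContinuousOn (fun l : ℂ => ‖1 - l‖) (spectrum ℂ (a * star a)) := by fun_prop
  have hsmall : ∃ l ∈ spectrum ℂ (a * star a), ‖1 - l‖ ≤ 1 := by
    obtain ⟨l, hl, hmax⟩ := hc.exists_isMaxOn hne hcont
    by_cases h0 : l = 0
    · exact ⟨l, hl, by simp [h0]⟩
    · have hm := (comm l h0).2 hl
      have e : (q : ℂ) ^ 2 * (1 - (1 - l) / (q : ℂ) ^ 2) + (1 - (q : ℂ) ^ 2) = l := by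
        rw [mul_sub, mul_div_cancel₀ _ hqc]; ring
      rw [← e, key] at hm
      have hle : ‖1 - (1 - (1 - l) / (q : ℂ) ^ 2)‖ ≤ ‖1 - l‖ := hmax hm
      rw [sub_sub_cancel, norm_div, hnq, div_le_iff₀ hq2] at hle
      refine ⟨l, hl, ?_⟩
      nlinarith [norm_nonneg (1 - l)]
  have hone : (1 : ℂ) ∈ spectrum ℂ (a * star a) := by
    obtain ⟨l, hl, hmin⟩ := hc.exists_isMinOn hne hcont
    obtain ⟨m, hm, hm1⟩ := hsmall
    have hl1 : ‖1 - l‖ ≤ 1 := le_trans (hmin hm) hm1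
    have e : 1 - ((q : ℂ) ^ 2 * l + (1 - (q : ℂ) ^ 2)) = (q : ℂ) ^ 2 * (1 - l) := by ring
    have hn0 : (q : ℂ) ^ 2 * l + (1 - (q : ℂ) ^ 2) ≠ 0 := by
      intro h0
      rw [h0, sub_zero] at e
      have := congrArg norm e
      rw [norm_mul, hnq, norm_one] at this
      nlinarith
    have hf := (comm _ hn0).1 ((key l).2 hl)
    have hle : ‖1 - l‖ ≤ ‖1 - ((q : ℂ) ^ 2 * l + (1 - (q : ℂ) ^ 2))‖ := hmin hf
    rw [e, norm_mul, hnq] at hle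
    have hz : ‖1 - l‖ = 0 := by nlinarith [norm_nonneg (1 - l)]
    have : l = 1 := (sub_eq_zero.1 (norm_eq_zero.1 hz)).symm
    exact this ▸ hl
  have hlb := spectrum.norm_le_norm_of_mem hone
  rw [hT, norm_one] at hlb
  nlinarith [norm_nonneg a]
end

section
/- Let A be a unital C*-algebra, q ∈ (0,1), and a ∈ A with a*a = q²·a a* + (1−q²)·1. Then the spectrum of a*a is contained in {1−q^{2n} : n ∈ ℕ, n ≥ 1} ∪ {1}, and the spectrum of a a* is contained in {1−q^{2n} : n ∈ ℕ} ∪ {1}. -/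
/-- In a unital C*-algebra, if `a* a = q² a a* + (1-q²) 1` with `q ∈ (0,1)`, then
`σ(a*a) ⊆ {1 - q^{2n} : n ≥ 1} ∪ {1}` and `σ(aa*) ⊆ {1 - q^{2n} : n ≥ 0} ∪ {1}`. -/
theorem spectrum_of_qSphere_relation {A : Type*} [NormedRing A] [StarRing A] [CStarRing A]
    [NormedAlgebra ℂ A] [CompleteSpace A]
    (q : ℝ) (hq : q ∈ Set.Ioo (0 : ℝ) 1) (a : A)
    (h : star a * a = ((q : ℂ) ^ 2) • (a * star a) + (1 - (q : ℂ) ^ 2) • (1 : A)) :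
    spectrum ℂ (star a * a) ⊆
        ({x : ℂ | ∃ n : ℕ, 1 ≤ n ∧ x = 1 - (q : ℂ) ^ (2 * n)} ∪ {1}) ∧
    spectrum ℂ (a * star a) ⊆
        ({x : ℂ | ∃ n : ℕ, x = 1 - (q : ℂ) ^ (2 * n)} ∪ {1}) := by
  obtain ⟨hq0, hq1⟩ := hq
  have hqc : (q : ℂ) ≠ 0 := by exact_mod_cast hq0.ne'
  have hq2 : (q : ℂ) ^ 2 ≠ 0 := pow_ne_zero 2 hqc
  -- affine relation
  have aff : ∀ t : ℂ, 1 - (q : ℂ) ^ 2 * t ∈ spectrum ℂ (star a * a) ↔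
      1 - t ∈ spectrum ℂ (a * star a) := by
    intro t
    rw [spectrum.mem_iff, spectrum.mem_iff, not_iff_not]
    have e : algebraMap ℂ A (1 - (q : ℂ) ^ 2 * t) - star a * a
        = (Units.mk0 _ hq2) • (algebraMap ℂ A (1 - t) - a * star a) := by
      rw [h, Units.smul_mk0, Algebra.algebraMap_eq_smul_one, Algebra.algebraMap_eq_smul_one]
      module
    rw [e]
    exact isUnit_smul_iff _ _
  have step : ∀ t : ℂ, t ≠ 1 → 1 - t ∈ spectrum ℂ (a * star a) →
      1 - t / (q : ℂ) ^ 2 ∈ spectrum ℂ (a * star a) := by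
    intro t ht hm
    rw [← aff, mul_div_cancel₀ _ hq2]
    have h1 : 1 - t ∈ spectrum ℂ (a * star a) \ {0} :=
      ⟨hm, fun h0 => ht (sub_eq_zero.mp h0).symm⟩
    rw [spectrum.nonzero_mul_comm] at h1
    exact h1.1
  have main : ∀ t : ℂ, 1 - t ∈ spectrum ℂ (a * star a) →
      (∃ n : ℕ, t = (q : ℂ) ^ (2 * n)) ∨ t = 0 := by
    intro t ht
    by_contra! hcon
    obtain ⟨hn, h0⟩ := hcon
    have all : ∀ n : ℕ, 1 - t / (q : ℂ) ^ (2 * n) ∈ spectrum ℂ (a * star a) := by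
      intro n
      induction n with
      | zero => simpa using ht
      | succ k ih =>
        have := step _ (fun h1 => hn k ((div_eq_one_iff_eq (pow_ne_zero _ hqc)).mp h1)) ih
        rwa [div_div, ← pow_add] at this
    set M : ℝ := ‖a * star a‖ * ‖(1 : A)‖ + 1
    have bd : ∀ n : ℕ, ‖t‖ ≤ M * (q ^ 2) ^ n := by
      intro n
      have h1 := spectrum.norm_le_norm_mul_of_mem (all n)
      have h2 : ‖t / (q : ℂ) ^ (2 * n)‖ ≤ M := by
        have h3 := norm_sub_le (1 : ℂ) (1 - t / (q : ℂ) ^ (2 * n))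
        rw [sub_sub_cancel, norm_one] at h3
        linarith
      rw [norm_div, norm_pow, Complex.norm_real, Real.norm_of_nonneg hq0.le,
        div_le_iff₀ (by positivity), pow_mul] at h2
      exact h2
    have lim : Filter.Tendsto (fun n : ℕ => M * (q ^ 2) ^ n) Filter.atTop (nhds (M * 0)) :=
      (tendsto_pow_atTop_nhds_zero_of_lt_one (by positivity) (by nlinarith)).const_mul M
    have := ge_of_tendsto' lim bd
    rw [mul_zero] at this
    exact h0 (norm_le_zero_iff.mp this)
  constructor
  · intro x hx
    have hx' : 1 - (q : ℂ) ^ 2 * ((1 - x) / (q : ℂ) ^ 2) ∈ spectrum ℂ (star a * a) := by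
      rwa [mul_div_cancel₀ _ hq2, sub_sub_cancel]
    rcases main _ ((aff _).mp hx') with ⟨n, hn⟩ | h0
    · left
      refine ⟨n + 1, by omega, ?_⟩
      rw [div_eq_iff hq2, ← pow_add] at hn
      rw [mul_add, mul_one, ← hn, sub_sub_cancel]
    · right
      rw [div_eq_zero_iff, or_iff_left hq2] at h0
      exact (sub_eq_zero.mp h0).symm
  · intro x hx
    rcases main (1 - x) (by rwa [sub_sub_cancel]) with ⟨n, hn⟩ | h0
    · left
      exact ⟨n, by rw [← hn, sub_sub_cancel]⟩
    · right
      exact (sub_eq_zero.mp h0).symm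
end

section
/- Let A be a unital C*-algebra, q ∈ (0,1), and z₁, z₂, z₃, z₄ ∈ A elements satisfying the Vaksman–Soibelman S_q^7 relations. Then the spectrum of z₂*z₂ is contained in {(1−q^{2k})q^{2(n+m)} : n, m ≥ 0, k ≥ 1} ∪ {q^{2(m+n)} : n, m ≥ 0} ∪ {0}, and the spectrum of z₂z₂* is contained in {(1−q^{2k})q^{2(n+m)} : n, m, k ≥ 0} ∪ {q^{2(m+n)} : n, m ≥ 0}. -/
/-- The Vaksman–Soibelman `S_q^7` relations for a 4-tuple of elements of a unital
complex *-algebra. -/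
def VSRel {A : Type*} [Ring A] [StarRing A] [Algebra ℂ A] (q : ℝ) (z : Fin 4 → A) : Prop :=
  (∀ i j : Fin 4, i < j → z i * z j = (q : ℂ) • (z j * z i)) ∧
  (∀ i j : Fin 4, i ≠ j → star (z j) * z i = (q : ℂ) • (z i * star (z j))) ∧
  (∀ k : Fin 4, star (z k) * z k
      = z k * star (z k) + (1 - (q : ℂ) ^ 2) • ∑ j ∈ Finset.Iio k, z j * star (z j)) ∧
  ∑ k : Fin 4, z k * star (z k) = 1

theorem qs_swap {A : Type*} [Ring A] (x y u : A) (hu : IsUnit u) (hc : Commute u x)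
    (h : IsUnit (y * x - u)) : IsUnit (x * y - u) := by
  obtain ⟨u, rfl⟩ := hu
  have hc' : (↑u⁻¹ : A) * x = x * ↑u⁻¹ := (Commute.units_inv_left hc).eq
  have h1 : IsUnit (1 - y * (↑u⁻¹ * x)) := by
    have h2 := (h.mul (u⁻¹).isUnit).neg
    have : -((y * x - ↑u) * ↑u⁻¹) = 1 - y * (↑u⁻¹ * x) := by
      rw [hc', sub_mul, Units.mul_inv, mul_assoc]; abel
    rwa [this] at h2
  have h3 : IsUnit (1 - (↑u⁻¹ * x) * y) := by
    obtain ⟨w, hw⟩ := h1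
    generalize (↑u⁻¹ * x : A) = a at *
    have e1 : (w : A) * ↑w⁻¹ = 1 := w.mul_inv
    have e2 : (↑w⁻¹ : A) * ↑w = 1 := w.inv_mul
    generalize (↑w⁻¹ : A) = b at *
    rw [hw] at e1 e2
    have e1' : y * a * b = b - 1 := by
      rw [sub_mul, one_mul] at e1; rw [← e1]; abel
    have e2' : b * (y * a) = b - 1 := by
      rw [mul_sub, mul_one] at e2; rw [← e2]; abel
    refine ⟨⟨1 - a * y, 1 + a * b * y, ?_, ?_⟩, rfl⟩
    · calc (1 - a * y) * (1 + a * b * y)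
          = 1 - a * y + a * b * y - a * (y * a * b) * y := by noncomm_ring
        _ = 1 := by rw [e1']; noncomm_ring
    · calc (1 + a * b * y) * (1 - a * y)
          = 1 - a * y + a * b * y - a * (b * (y * a)) * y := by noncomm_ring
        _ = 1 := by rw [e2']; noncomm_ring
  have h4 := (u.isUnit.mul h3).neg
  have : -(↑u * (1 - ↑u⁻¹ * x * y)) = x * y - ↑u := by
    rw [mul_sub, mul_one, mul_assoc (↑u⁻¹ : A), Units.mul_inv_cancel_left]; abel
  rwa [this] at h4

theorem qs_main {A : Type*} [NormedRing A] [NormedAlgebra ℂ A] [CompleteSpace A]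
    (q : ℝ) (hq : q ∈ Set.Ioo (0 : ℝ) 1) (x y P Q v : A)
    (h1 : x * y = P - Q) (h2 : y * x = P - ((q : ℂ) ^ 2) • Q)
    (hP : Commute P x) (hvx : Commute v x) (hv : IsUnit v)
    (h : ∀ k : ℕ, IsUnit (((q : ℂ) ^ (2 * k)) • P - v)) (k : ℕ) :
    IsUnit (v - ((q : ℂ) ^ (2 * k)) • Q) := by
  have step : ∀ k : ℕ, IsUnit (v - ((q : ℂ) ^ (2 * (k + 1))) • Q) →
      IsUnit (v - ((q : ℂ) ^ (2 * k)) • Q) := by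
    intro k hk
    have := qs_swap (((q : ℂ) ^ (2 * k)) • x) y (((q : ℂ) ^ (2 * k)) • P - v) (h k)
      (((hP.smul_left _).sub_left hvx).smul_right _) (by
        rw [mul_smul_comm, h2, smul_sub, smul_smul, ← pow_add]
        convert hk using 1
        rw [show 2 * (k + 1) = 2 * k + 2 by ring]; abel)
    rw [smul_mul_assoc, h1, smul_sub] at this
    convert this using 1
    abel
  by_contra hk
  have hall : ∀ j, ¬ IsUnit (v - ((q : ℂ) ^ (2 * (k + j))) • Q) := by
    intro j
    induction j with
    | zero => exact hk
    | succ j ih => exact fun hj => ih (step _ hj)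
  have ht : Filter.Tendsto (fun n : ℕ => (q : ℂ) ^ n) Filter.atTop (nhds 0) := by
    apply tendsto_pow_atTop_nhds_zero_of_norm_lt_one
    simpa [abs_of_pos hq.1] using hq.2
  have ht2 : Filter.Tendsto (fun j : ℕ => v - ((q : ℂ) ^ (2 * (k + j))) • Q)
      Filter.atTop (nhds v) := by
    have h3 : Filter.Tendsto (fun j : ℕ => 2 * (k + j)) Filter.atTop Filter.atTop :=
      Filter.tendsto_atTop_mono (fun j => by simp only [id]; omega) Filter.tendsto_id
    simpa using ((ht.comp h3).smul_const Q).const_sub v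
  obtain ⟨j, hj⟩ := (ht2.eventually (Units.isOpen.mem_nhds hv)).exists
  exact hall j hj

theorem qs_scalar {A : Type*} [NormedRing A] [NormedAlgebra ℂ A] [CompleteSpace A]
    (q : ℝ) (hq : q ∈ Set.Ioo (0 : ℝ) 1) (x y P Q : A)
    (h1 : x * y = P - Q) (h2 : y * x = P - ((q : ℂ) ^ 2) • Q)
    (hP : Commute P x)
    (h : ∀ μ : ℂ, μ ≠ 0 → (∀ n : ℕ, μ ≠ (q : ℂ) ^ (2 * n)) → IsUnit (algebraMap ℂ A μ - P))
    (μ : ℂ) (h0 : μ ≠ 0) (hn : ∀ n : ℕ, μ ≠ (q : ℂ) ^ (2 * n)) :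
    IsUnit (algebraMap ℂ A μ - Q) := by
  have hq0 : (q : ℂ) ≠ 0 := by exact_mod_cast hq.1.ne'
  have := qs_main q hq x y P Q (algebraMap ℂ A μ) h1 h2 hP (Algebra.commutes μ x)
    ((IsUnit.mk0 μ h0).map _) (fun k => by
      have hk := h (μ / (q : ℂ) ^ (2 * k)) (div_ne_zero h0 (pow_ne_zero _ hq0)) (fun n hh => by
        rw [div_eq_iff (pow_ne_zero _ hq0), ← pow_add, ← mul_add] at hh
        exact hn _ hh)
      have hk2 := (((IsUnit.mk0 _ (pow_ne_zero (2 * k) hq0)).map (algebraMap ℂ A)).mul hk).neg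
      convert hk2 using 1
      rw [mul_sub, ← map_mul, mul_div_cancel₀ _ (pow_ne_zero _ hq0), ← Algebra.smul_def]
      abel) 0
  simpa using this

theorem spectrum_z2_qSphere {A : Type*} [NormedRing A] [StarRing A] [CStarRing A]
    [NormedAlgebra ℂ A] [CompleteSpace A]
    (q : ℝ) (hq : q ∈ Set.Ioo (0 : ℝ) 1) (z₁ z₂ z₃ z₄ : A)
    (hVS : VSRel q ![z₁, z₂, z₃, z₄]) :
    spectrum ℂ (star z₂ * z₂) ⊆
        ({x : ℂ | ∃ n m k : ℕ, 1 ≤ k ∧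
            x = (1 - (q : ℂ) ^ (2 * k)) * (q : ℂ) ^ (2 * (n + m))} ∪
          {x : ℂ | ∃ n m : ℕ, x = (q : ℂ) ^ (2 * (m + n))} ∪ {0}) ∧
    spectrum ℂ (z₂ * star z₂) ⊆
        ({x : ℂ | ∃ n m k : ℕ, x = (1 - (q : ℂ) ^ (2 * k)) * (q : ℂ) ^ (2 * (n + m))} ∪
          {x : ℂ | ∃ n m : ℕ, x = (q : ℂ) ^ (2 * (m + n))}) := by
  obtain ⟨r1, r2, r3, r4⟩ := hVS
  have hq0 : (q : ℂ) ≠ 0 := by exact_mod_cast hq.1.ne'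
  have hq1 : ∀ k : ℕ, (1 : ℂ) - (q : ℂ) ^ (2 * (k + 1)) ≠ 0 := by
    intro k hk
    have : (q : ℝ) ^ (2 * (k + 1)) < 1 := pow_lt_one₀ hq.1.le hq.2 (by omega)
    have h2 : (1 : ℝ) - q ^ (2 * (k + 1)) = 0 := by exact_mod_cast hk
    linarith
  have c : ∀ i j : Fin 4, i < j → ∀ a b : A, a = ![z₁, z₂, z₃, z₄] i → b = ![z₁, z₂, z₃, z₄] j →
      a * star a * b = ((q : ℂ) ^ 2) • (b * (a * star a)) := by
    rintro i j hij a b rfl rfl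
    rw [mul_assoc, r2 j i hij.ne', mul_smul_comm, ← mul_assoc, r1 i j hij, smul_mul_assoc,
      smul_smul, mul_assoc, sq]
  have c12 := c 0 1 (by decide) z₁ z₂ rfl rfl
  have c13 := c 0 2 (by decide) z₁ z₃ rfl rfl
  have c23 := c 1 2 (by decide) z₂ z₃ rfl rfl
  have s2 : star z₂ * z₂ = z₂ * star z₂ + (1 - (q : ℂ) ^ 2) • (z₁ * star z₁) := by
    have := r3 1
    rw [show Finset.Iio (1 : Fin 4) = {0} by decide] at this
    simpa using this
  have s3 : star z₃ * z₃ = z₃ * star z₃ + (1 - (q : ℂ) ^ 2) • (z₁ * star z₁ + z₂ * star z₂) := by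
    have := r3 2
    rw [show Finset.Iio (2 : Fin 4) = {0, 1} by decide] at this
    simpa using this
  have s4 : star z₄ * z₄ = z₄ * star z₄ +
      (1 - (q : ℂ) ^ 2) • (z₁ * star z₁ + z₂ * star z₂ + z₃ * star z₃) := by
    have := r3 3
    rw [show Finset.Iio (3 : Fin 4) = {0, 1, 2} by decide] at this
    simpa [add_assoc] using this
  have s5 : z₁ * star z₁ + z₂ * star z₂ + z₃ * star z₃ + z₄ * star z₄ = 1 := by
    simpa [Fin.sum_univ_four] using r4
  clear r1 r2 r3 r4 c
  have k3 : Commute (z₁ * star z₁ + z₂ * star z₂ + z₃ * star z₃) z₃ := by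
    unfold Commute SemiconjBy
    rw [add_mul, add_mul, c13, c23, mul_assoc z₃, s3]
    simp only [mul_add, mul_sub, mul_smul_comm, sub_smul, one_smul, smul_add]
    abel
  have k2 : Commute (z₁ * star z₁ + z₂ * star z₂) z₂ := by
    unfold Commute SemiconjBy
    rw [add_mul, c12, mul_assoc z₂, s2]
    simp only [mul_add, mul_sub, mul_smul_comm, sub_smul, one_smul]
    abel
  generalize z₁ * star z₁ = a at *
  have u3 := qs_scalar q hq z₄ (star z₄) 1 (a + z₂ * star z₂ + z₃ * star z₃)
    (by rw [← s5]; abel) (by rw [s4, ← s5, sub_smul, one_smul]; abel) (Commute.one_left _)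
    (fun μ h0 hn => by
      rw [← map_one (algebraMap ℂ A), ← map_sub]
      exact (IsUnit.mk0 _ (sub_ne_zero.2 (by simpa using hn 0))).map _)
  have u2 := qs_scalar q hq z₃ (star z₃) (a + z₂ * star z₂ + z₃ * star z₃) (a + z₂ * star z₂)
    (by abel) (by rw [s3, sub_smul, one_smul]; abel) k3 u3
  have key : ∀ μ : ℂ, μ ≠ 0 → (∀ n : ℕ, μ ≠ (q : ℂ) ^ (2 * n)) →
      (∀ n k : ℕ, μ ≠ (1 - (q : ℂ) ^ (2 * (k + 1))) * (q : ℂ) ^ (2 * n)) → ∀ j : ℕ,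
      IsUnit ((a + z₂ * star z₂ - algebraMap ℂ A μ) - ((q : ℂ) ^ (2 * j)) • a) := by
    intro μ h0 hn hk j
    refine qs_main q hq z₂ (star z₂) (a + z₂ * star z₂) a _ (by abel)
      (by rw [s2, sub_smul, one_smul]; abel) k2 (k2.sub_left (Algebra.commutes μ z₂)) ?_ ?_ j
    · have := (u2 μ h0 hn).neg
      rwa [neg_sub] at this
    · rintro (_ | k)
      · simpa using (IsUnit.mk0 μ h0).map (algebraMap ℂ A)
      · have h3 := u2 (μ / (1 - (q : ℂ) ^ (2 * (k + 1)))) (div_ne_zero h0 (hq1 k))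
          (fun n hh => by
            rw [div_eq_iff (hq1 k), mul_comm] at hh
            exact hk n k hh)
        have h4 := ((IsUnit.mk0 _ (hq1 k)).map (algebraMap ℂ A)).mul h3
        convert h4 using 1
        rw [mul_sub, ← map_mul, mul_div_cancel₀ _ (hq1 k), ← Algebra.smul_def, sub_smul, one_smul]
        abel
  constructor
  · intro μ hμ
    by_contra hc
    simp only [Set.mem_union, Set.mem_ofPred_eq, Set.mem_singleton_iff, not_or, not_exists] at hc
    obtain ⟨⟨ha, hb⟩, h0⟩ := hc
    have := (key μ h0 (fun n h => hb n 0 (by simpa using h))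
      (fun n k h => ha n 0 (k + 1) ⟨by omega, by simpa using h⟩) 1).neg
    apply hμ
    show IsUnit _
    convert this using 1
    rw [s2, sub_smul, one_smul, mul_one]
    abel
  · intro μ hμ
    by_contra hc
    simp only [Set.mem_union, Set.mem_ofPred_eq, not_or, not_exists] at hc
    obtain ⟨ha, hb⟩ := hc
    have := (key μ (fun h => ha 0 0 0 (by simpa using h)) (fun n h => hb n 0 (by simpa using h))
      (fun n k h => ha n 0 (k + 1) (by simpa using h)) 0).neg
    apply hμ
    show IsUnit _
    convert this using 1
    rw [mul_zero, pow_zero, one_smul]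
    abel
end

section
/- Let A be a unital C*-algebra, q ∈ (0,1), and z₁, z₂, z₃, z₄ ∈ A elements satisfying the Vaksman–Soibelman S_q^7 relations. Then the spectrum of z₁z₁* is contained in {q^{2(n+m+k)} : n, m, k ≥ 0} ∪ {0}. -/
theorem qs_star_smul {A : Type*} [NormedRing A] [StarRing A] [CStarRing A]
    [NormedAlgebra ℂ A] (q : ℝ) (a : A) : star ((q : ℂ) • a) = (q : ℂ) • star a := by
  have h := map_real_smul (starAddEquiv : A ≃+ A) (continuous_star : Continuous (star : A → A)) q a
  simpa using h

theorem qs_comm {A : Type*} [Ring A] [StarRing A] [Algebra ℂ A] (c : ℂ) (a z : A)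
    (h1 : a * z = c • (z * a)) (h2 : star a * z = c • (z * star a))
    (h3 : star z * a = c • (a * star z)) (h4 : star z * star a = c • (star a * star z)) :
    (a * star a) * z = (c ^ 2) • (z * (a * star a)) ∧
    star z * (a * star a) = (c ^ 2) • ((a * star a) * star z) := by
  constructor
  · rw [mul_assoc, h2, mul_smul_comm, ← mul_assoc, h1, smul_mul_assoc, smul_smul, mul_assoc, pow_two]
  · rw [← mul_assoc, h3, smul_mul_assoc, mul_assoc, h4, mul_smul_comm, smul_smul, mul_assoc, pow_two]

theorem qs_one {A : Type*} [Ring A] [Algebra ℂ A] (p l : ℂ) (hp : p ≠ 0) (x z w R : A)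
    (h1 : x * z = p • (z * x)) (h2 : w * x = p • (x * w))
    (hR : (algebraMap ℂ A (p⁻¹ * l) - x) * R = 1) (hR' : R * (algebraMap ℂ A (p⁻¹ * l) - x) = 1) :
    (algebraMap ℂ A l - x) * (z * R * w) = p • (z * w) ∧
    (z * R * w) * (algebraMap ℂ A l - x) = p • (z * w) := by
  have e : ∀ y : A, l • y = p • ((p⁻¹ * l) • y) := by
    intro y; rw [smul_smul, mul_inv_cancel_left₀ hp]
  have k1 : (algebraMap ℂ A l - x) * z = p • (z * (algebraMap ℂ A (p⁻¹ * l) - x)) := by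
    rw [sub_mul, mul_sub, h1, ← Algebra.commutes (p⁻¹ * l) z, ← Algebra.smul_def,
      ← Algebra.smul_def, e, smul_sub]
  have k2 : w * (algebraMap ℂ A l - x) = p • ((algebraMap ℂ A (p⁻¹ * l) - x) * w) := by
    rw [sub_mul, mul_sub, h2, ← Algebra.commutes l w, ← Algebra.smul_def,
      ← Algebra.smul_def, e, smul_sub]
  constructor
  · rw [← mul_assoc, ← mul_assoc, k1, smul_mul_assoc, smul_mul_assoc, mul_assoc z, hR, mul_one]
  · rw [mul_assoc, k2, mul_smul_comm, mul_assoc z, ← mul_assoc R, hR', one_mul]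

theorem qs_step {A : Type*} [Ring A] [Algebra ℂ A] (p l : ℂ) (hp : p ≠ 0) (hl : l ≠ 1)
    (x : A) (z w : Fin 3 → A)
    (h1 : ∀ j, x * z j = p • (z j * x)) (h2 : ∀ j, w j * x = p • (x * w j))
    (hs : x + ∑ j, z j * w j = 1) (hm : l ∈ spectrum ℂ x) : p⁻¹ * l ∈ spectrum ℂ x := by
  by_contra hn
  rw [spectrum.notMem_iff] at hn
  rw [spectrum.mem_iff] at hm
  apply hm
  obtain ⟨u, hu⟩ := hn
  have hR : (algebraMap ℂ A (p⁻¹ * l) - x) * (↑u⁻¹ : A) = 1 := by rw [← hu]; simp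
  have hR' : (↑u⁻¹ : A) * (algebraMap ℂ A (p⁻¹ * l) - x) = 1 := by rw [← hu]; simp
  generalize (↑u⁻¹ : A) = R at hR hR'
  have k := fun j => qs_one p l hp x (z j) (w j) R (h1 j) (h2 j) hR hR'
  have hs' : ∑ j, z j * w j = 1 - x := by rw [← hs]; abel
  have hl' : (1 - l) ≠ 0 := sub_ne_zero.mpr hl.symm
  have fin : ((1 - l)⁻¹ : ℂ) • ((1 - x) - (algebraMap ℂ A l - x)) = 1 := by
    rw [sub_sub_sub_cancel_right, ← map_one (algebraMap ℂ A), ← map_sub, Algebra.smul_def,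
      ← map_mul, inv_mul_cancel₀ hl']
  have r1 : (algebraMap ℂ A l - x) *
      ((1 - l)⁻¹ • (p⁻¹ • (∑ j, z j * R * w j) - 1)) = 1 := by
    rw [mul_smul_comm, mul_sub, mul_smul_comm, Finset.mul_sum,
      Finset.sum_congr rfl (fun j _ => (k j).1), ← Finset.smul_sum, smul_smul,
      inv_mul_cancel₀ hp, one_smul, mul_one, hs', fin]
  have r2 : ((1 - l)⁻¹ • (p⁻¹ • (∑ j, z j * R * w j) - 1)) *
      (algebraMap ℂ A l - x) = 1 := by
    rw [smul_mul_assoc, sub_mul, smul_mul_assoc, Finset.sum_mul,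
      Finset.sum_congr rfl (fun j _ => (k j).2), ← Finset.smul_sum, smul_smul,
      inv_mul_cancel₀ hp, one_smul, one_mul, hs', fin]
  exact ⟨⟨_, _, r1, r2⟩, rfl⟩

/-- Spectrum of `z₁ z₁*` for the Vaksman–Soibelman quantum 7-sphere. -/
theorem spectrum_z1_qSphere {A : Type*} [NormedRing A] [StarRing A] [CStarRing A]
    [NormedAlgebra ℂ A] [CompleteSpace A]
    (q : ℝ) (hq : q ∈ Set.Ioo (0 : ℝ) 1) (z₁ z₂ z₃ z₄ : A)
    (hVS : VSRel q ![z₁, z₂, z₃, z₄]) :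
    spectrum ℂ (z₁ * star z₁) ⊆
        ({x : ℂ | ∃ n m k : ℕ, x = (q : ℂ) ^ (2 * (n + m + k))} ∪ {0}) := by
  obtain ⟨hA, hB, -, hD⟩ := hVS
  obtain ⟨hq0, hq1⟩ := hq
  have hqc : (q : ℂ) ≠ 0 := by exact_mod_cast hq0.ne'
  have hp : (q : ℂ) ^ 2 ≠ 0 := pow_ne_zero _ hqc
  have key : ∀ j : Fin 3, _ := fun j => qs_comm (q : ℂ) z₁ (![z₂, z₃, z₄] j)
    (hA 0 j.succ (Fin.succ_pos j)) (hB j.succ 0 (Fin.succ_ne_zero j))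
    (hB 0 j.succ (Fin.succ_ne_zero j).symm)
    (by
      have h := congrArg star (hA 0 j.succ (Fin.succ_pos j))
      rw [qs_star_smul, star_mul, star_mul] at h
      exact h)
  have hs : z₁ * star z₁ + ∑ j : Fin 3, ![z₂, z₃, z₄] j * star (![z₂, z₃, z₄] j) = 1 := by
    rw [Fin.sum_univ_succ] at hD
    exact hD
  intro l hl
  by_contra hcon
  simp only [Set.mem_union, Set.mem_setOf_eq, Set.mem_singleton_iff, not_or, not_exists] at hcon
  obtain ⟨hc, h0⟩ := hcon
  have it : ∀ n : ℕ, (((q : ℂ) ^ 2)⁻¹) ^ n * l ∈ spectrum ℂ (z₁ * star z₁) := by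
    intro n
    induction n with
    | zero => simpa using hl
    | succ n ih =>
      rw [pow_succ', mul_assoc]
      refine qs_step ((q : ℂ) ^ 2) _ hp ?_ _ ![z₂, z₃, z₄] (fun j => star (![z₂, z₃, z₄] j))
        (fun j => (key j).1) (fun j => (key j).2) hs ih
      intro h1
      apply hc n 0 0
      rw [inv_pow, inv_mul_eq_iff_eq_mul₀ (pow_ne_zero _ hp), mul_one] at h1
      rw [h1, ← pow_mul]; simp
  obtain ⟨C, hC⟩ := (spectrum.isCompact (𝕜 := ℂ) (z₁ * star z₁)).isBounded.exists_norm_le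
  have hl0 : 0 < ‖l‖ := norm_pos_iff.mpr h0
  have hgt : 1 < (q ^ 2)⁻¹ := (one_lt_inv₀ (by positivity)).mpr (by nlinarith)
  obtain ⟨n, hn⟩ := pow_unbounded_of_one_lt (C / ‖l‖) hgt
  have := hC _ (it n)
  rw [norm_mul, norm_pow, norm_inv, norm_pow, Complex.norm_real, Real.norm_of_nonneg hq0.le] at this
  rw [div_lt_iff₀ hl0] at hn
  linarith
end

section
/- Let H be a complex Hilbert space, q ∈ (0,1), and Z₁, Z₂, Z₃, Z₄ bounded operators on H satisfying the Vaksman–Soibelman S_q^7 relations. Suppose ξ ∈ H satisfies Z₁Z₁*ξ = ξ and Z_iZ_i*ξ = 0 for i = 2, 3, 4. Let n, m, k, r, t ∈ ℕ with k + m + t = r + n, and set v = Z₁^r (Z₁*)^t Z₂^k Z₃^m Z₄^n ξ. Then Z₁Z₁* v = q^{2(n+m+k)} v, Z₂Z₂* v = (1−q^{2k}) q^{2(m+n)} v, Z₃Z₃* v = q^{2n}(1−q^{2m}) v, and Z₄Z₄* v = (1−q^{2n}) v. -/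
section helpers

variable {H : Type*} [NormedAddCommGroup H] [InnerProductSpace ℂ H] [CompleteSpace H]

theorem step_lt {c : ℂ} {X Y : H →L[ℂ] H}
    (a : X * Y = c • (Y * X)) (b : star X * Y = c • (Y * star X)) (x : H) :
    X (star X (Y x)) = c ^ 2 • Y (X (star X x)) := by
  have b' := DFunLike.congr_fun b x
  have a' := DFunLike.congr_fun a (star X x)
  simp only [mul_apply_eq_comp, smul_apply] at a' b'
  rw [b', map_smul, a', smul_smul, sq]

theorem step_gt {c : ℂ} (hc : c ≠ 0) {X Y : H →L[ℂ] H}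
    (a : Y * X = c • (X * Y)) (b : star X * Y = c • (Y * star X)) (x : H) :
    X (star X (Y x)) = Y (X (star X x)) := by
  have b' := DFunLike.congr_fun b x
  have a' := DFunLike.congr_fun a (star X x)
  simp only [mul_apply_eq_comp, smul_apply] at a' b'
  rw [b', map_smul, a']

def JE (Z₁ Z₂ Z₃ Z₄ : H →L[ℂ] H) (a b c d : ℂ) (x : H) : Prop :=
  Z₁ (star Z₁ x) = a • x ∧ Z₂ (star Z₂ x) = b • x ∧ Z₃ (star Z₃ x) = c • x ∧
    Z₄ (star Z₄ x) = d • x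

end helpers

/-- If `ξ` satisfies `Z₁Z₁*ξ = ξ` and `Z_iZ_i*ξ = 0` for `i = 2,3,4`, then the vector
`v = Z₁^r (Z₁*)^t Z₂^k Z₃^m Z₄^n ξ` (with `k+m+t = r+n`) is a joint eigenvector of the
`Z_i Z_i*` with the indicated eigenvalues. -/
theorem eigenvector_qSphere {H : Type*} [NormedAddCommGroup H] [InnerProductSpace ℂ H]
    [CompleteSpace H] (q : ℝ) (hq : q ∈ Set.Ioo (0 : ℝ) 1)
    (Z₁ Z₂ Z₃ Z₄ : H →L[ℂ] H) (hVS : VSRel q ![Z₁, Z₂, Z₃, Z₄]) (ξ : H)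
    (h1 : (Z₁ * star Z₁) ξ = ξ) (h2 : (Z₂ * star Z₂) ξ = 0)
    (h3 : (Z₃ * star Z₃) ξ = 0) (h4 : (Z₄ * star Z₄) ξ = 0)
    (n m k r t : ℕ) (hrt : k + m + t = r + n) (v : H)
    (hv : v = (Z₁ ^ r * (star Z₁) ^ t * Z₂ ^ k * Z₃ ^ m * Z₄ ^ n) ξ) :
    (Z₁ * star Z₁) v = ((q : ℂ) ^ (2 * (n + m + k))) • v ∧
    (Z₂ * star Z₂) v = ((1 - (q : ℂ) ^ (2 * k)) * (q : ℂ) ^ (2 * (m + n))) • v ∧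
    (Z₃ * star Z₃) v = ((q : ℂ) ^ (2 * n) * (1 - (q : ℂ) ^ (2 * m))) • v ∧
    (Z₄ * star Z₄) v = (1 - (q : ℂ) ^ (2 * n)) • v := by
  have hq0 : (q : ℂ) ≠ 0 := by exact_mod_cast hq.1.ne'
  obtain ⟨hc, hs, hn, -⟩ := hVS
  have c12 : Z₁ * Z₂ = (q : ℂ) • (Z₂ * Z₁) := hc 0 1 (by decide)
  have c13 : Z₁ * Z₃ = (q : ℂ) • (Z₃ * Z₁) := hc 0 2 (by decide)
  have c14 : Z₁ * Z₄ = (q : ℂ) • (Z₄ * Z₁) := hc 0 3 (by decide)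
  have c23 : Z₂ * Z₃ = (q : ℂ) • (Z₃ * Z₂) := hc 1 2 (by decide)
  have c24 : Z₂ * Z₄ = (q : ℂ) • (Z₄ * Z₂) := hc 1 3 (by decide)
  have c34 : Z₃ * Z₄ = (q : ℂ) • (Z₄ * Z₃) := hc 2 3 (by decide)
  have s12 : star Z₁ * Z₂ = (q : ℂ) • (Z₂ * star Z₁) := hs 1 0 (by decide)
  have s13 : star Z₁ * Z₃ = (q : ℂ) • (Z₃ * star Z₁) := hs 2 0 (by decide)
  have s14 : star Z₁ * Z₄ = (q : ℂ) • (Z₄ * star Z₁) := hs 3 0 (by decide)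
  have s23 : star Z₂ * Z₃ = (q : ℂ) • (Z₃ * star Z₂) := hs 2 1 (by decide)
  have s24 : star Z₂ * Z₄ = (q : ℂ) • (Z₄ * star Z₂) := hs 3 1 (by decide)
  have s34 : star Z₃ * Z₄ = (q : ℂ) • (Z₄ * star Z₃) := hs 3 2 (by decide)
  have s21 : star Z₂ * Z₁ = (q : ℂ) • (Z₁ * star Z₂) := hs 0 1 (by decide)
  have s31 : star Z₃ * Z₁ = (q : ℂ) • (Z₁ * star Z₃) := hs 0 2 (by decide)
  have s41 : star Z₄ * Z₁ = (q : ℂ) • (Z₁ * star Z₄) := hs 0 3 (by decide)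
  have s32 : star Z₃ * Z₂ = (q : ℂ) • (Z₂ * star Z₃) := hs 1 2 (by decide)
  have s42 : star Z₄ * Z₂ = (q : ℂ) • (Z₂ * star Z₄) := hs 1 3 (by decide)
  have s43 : star Z₄ * Z₃ = (q : ℂ) • (Z₃ * star Z₄) := hs 2 3 (by decide)
  have i0 : Finset.Iio (0 : Fin 4) = ∅ := by decide
  have i1 : Finset.Iio (1 : Fin 4) = {0} := by decide
  have i2 : Finset.Iio (2 : Fin 4) = {0, 1} := by decide
  have i3 : Finset.Iio (3 : Fin 4) = {0, 1, 2} := by decide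
  have n1 : ∀ x, star Z₁ (Z₁ x) = Z₁ (star Z₁ x) := by
    intro x
    have := DFunLike.congr_fun (hn 0) x
    simpa [i0] using this
  have n2 : ∀ x, star Z₂ (Z₂ x) = Z₂ (star Z₂ x) + (1 - (q : ℂ) ^ 2) • Z₁ (star Z₁ x) := by
    intro x
    have := DFunLike.congr_fun (hn 1) x
    simpa [i1] using this
  have n3 : ∀ x, star Z₃ (Z₃ x) = Z₃ (star Z₃ x) +
      (1 - (q : ℂ) ^ 2) • (Z₁ (star Z₁ x) + Z₂ (star Z₂ x)) := by
    intro x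
    have := DFunLike.congr_fun (hn 2) x
    rw [i2, Finset.sum_insert (by decide), Finset.sum_singleton] at this
    exact this
  have n4 : ∀ x, star Z₄ (Z₄ x) = Z₄ (star Z₄ x) +
      (1 - (q : ℂ) ^ 2) • (Z₁ (star Z₁ x) + (Z₂ (star Z₂ x) + Z₃ (star Z₃ x))) := by
    intro x
    have := DFunLike.congr_fun (hn 3) x
    rw [i3, Finset.sum_insert (by decide), Finset.sum_insert (by decide),
      Finset.sum_singleton] at this
    exact this
  have J4 : ∀ a b c d x, JE Z₁ Z₂ Z₃ Z₄ a b c d x →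
      JE Z₁ Z₂ Z₃ Z₄ (q ^ 2 * a) (q ^ 2 * b) (q ^ 2 * c)
        (d + (1 - q ^ 2) * (a + (b + c))) (Z₄ x) := by
    rintro a b c d x ⟨e1, e2, e3, e4⟩
    refine ⟨?_, ?_, ?_, ?_⟩
    · rw [step_lt c14 s14, e1, map_smul, smul_smul]
    · rw [step_lt c24 s24, e2, map_smul, smul_smul]
    · rw [step_lt c34 s34, e3, map_smul, smul_smul]
    · rw [n4, e1, e2, e3, e4, ← add_smul, ← add_smul, smul_smul, ← add_smul, map_smul]
  have J3 : ∀ a b c d x, JE Z₁ Z₂ Z₃ Z₄ a b c d x →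
      JE Z₁ Z₂ Z₃ Z₄ (q ^ 2 * a) (q ^ 2 * b) (c + (1 - q ^ 2) * (a + b)) d (Z₃ x) := by
    rintro a b c d x ⟨e1, e2, e3, e4⟩
    refine ⟨?_, ?_, ?_, ?_⟩
    · rw [step_lt c13 s13, e1, map_smul, smul_smul]
    · rw [step_lt c23 s23, e2, map_smul, smul_smul]
    · rw [n3, e1, e2, e3, ← add_smul, smul_smul, ← add_smul, map_smul]
    · rw [step_gt hq0 c34 s43, e4, map_smul]
  have J2 : ∀ a b c d x, JE Z₁ Z₂ Z₃ Z₄ a b c d x →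
      JE Z₁ Z₂ Z₃ Z₄ (q ^ 2 * a) (b + (1 - q ^ 2) * a) c d (Z₂ x) := by
    rintro a b c d x ⟨e1, e2, e3, e4⟩
    refine ⟨?_, ?_, ?_, ?_⟩
    · rw [step_lt c12 s12, e1, map_smul, smul_smul]
    · rw [n2, e1, e2, smul_smul, ← add_smul, map_smul]
    · rw [step_gt hq0 c23 s32, e3, map_smul]
    · rw [step_gt hq0 c24 s42, e4, map_smul]
  have J1 : ∀ a b c d x, JE Z₁ Z₂ Z₃ Z₄ a b c d x → JE Z₁ Z₂ Z₃ Z₄ a b c d (Z₁ x) := by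
    rintro a b c d x ⟨e1, e2, e3, e4⟩
    refine ⟨?_, ?_, ?_, ?_⟩
    · rw [n1, e1, map_smul]
    · rw [step_gt hq0 c12 s21, e2, map_smul]
    · rw [step_gt hq0 c13 s31, e3, map_smul]
    · rw [step_gt hq0 c14 s41, e4, map_smul]
  have K : ∀ Y : H →L[ℂ] H, Z₁ * Y = (q : ℂ) • (Y * Z₁) →
      star Y * Z₁ = (q : ℂ) • (Z₁ * star Y) →
      ∀ x, Y (star Y (star Z₁ x)) = star Z₁ (Y (star Y x)) := by
    intro Y a b x
    have e : Y * star Y * Z₁ = Z₁ * (Y * star Y) := by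
      ext y
      exact step_gt hq0 a b y
    have e' := congrArg star e
    simp only [star_mul, star_star] at e'
    exact (DFunLike.congr_fun e' x).symm
  have J1s : ∀ a b c d x, JE Z₁ Z₂ Z₃ Z₄ a b c d x →
      JE Z₁ Z₂ Z₃ Z₄ a b c d (star Z₁ x) := by
    rintro a b c d x ⟨e1, e2, e3, e4⟩
    refine ⟨?_, ?_, ?_, ?_⟩
    · rw [← n1, e1, map_smul]
    · rw [K _ c12 s21, e2, map_smul]
    · rw [K _ c13 s31, e3, map_smul]
    · rw [K _ c14 s41, e4, map_smul]
  have A0 : JE Z₁ Z₂ Z₃ Z₄ 1 0 0 0 ξ :=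
    ⟨by rw [one_smul]; exact h1, by rw [zero_smul]; exact h2, by rw [zero_smul]; exact h3,
      by rw [zero_smul]; exact h4⟩
  have A4 : JE Z₁ Z₂ Z₃ Z₄ (q ^ (2 * n)) 0 0 (1 - q ^ (2 * n)) ((Z₄ ^ n) ξ) := by
    clear hrt hv
    induction n with
    | zero => simpa using A0
    | succ n ih =>
      rw [pow_succ', mul_apply_eq_comp]
      convert J4 _ _ _ _ _ ih using 1 <;> ring
  have A3 : JE Z₁ Z₂ Z₃ Z₄ (q ^ (2 * (n + m))) 0 (q ^ (2 * n) * (1 - q ^ (2 * m)))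
      (1 - q ^ (2 * n)) ((Z₃ ^ m) ((Z₄ ^ n) ξ)) := by
    clear hrt hv
    induction m with
    | zero => simpa using A4
    | succ m ih =>
      rw [pow_succ' Z₃, mul_apply_eq_comp]
      convert J3 _ _ _ _ _ ih using 1 <;> ring
  have A2 : JE Z₁ Z₂ Z₃ Z₄ (q ^ (2 * (n + m + k))) ((1 - q ^ (2 * k)) * q ^ (2 * (m + n)))
      (q ^ (2 * n) * (1 - q ^ (2 * m)))
      (1 - q ^ (2 * n)) ((Z₂ ^ k) ((Z₃ ^ m) ((Z₄ ^ n) ξ))) := by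
    clear hrt hv
    induction k with
    | zero => simpa using A3
    | succ k ih =>
      rw [pow_succ' Z₂, mul_apply_eq_comp]
      convert J2 _ _ _ _ _ ih using 1 <;> ring
  have P : ∀ (Y : H →L[ℂ] H) (a b c d : ℂ),
      (∀ x, JE Z₁ Z₂ Z₃ Z₄ a b c d x → JE Z₁ Z₂ Z₃ Z₄ a b c d (Y x)) →
      ∀ (l : ℕ) x, JE Z₁ Z₂ Z₃ Z₄ a b c d x → JE Z₁ Z₂ Z₃ Z₄ a b c d ((Y ^ l) x) := by
    intro Y a b c d hY l x hx
    induction l with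
    | zero => simpa using hx
    | succ l ih =>
      rw [pow_succ', mul_apply_eq_comp]
      exact hY _ ih
  have A := P Z₁ _ _ _ _ (J1 _ _ _ _) r _ (P (star Z₁) _ _ _ _ (J1s _ _ _ _) t _ A2)
  rw [hv]
  exact A
end

section
/- Let H be a complex Hilbert space, q ∈ (0,1), and Z₁, Z₂, Z₃, Z₄ bounded operators on H satisfying the Vaksman–Soibelman S_q^7 relations. Suppose ξ ∈ H satisfies Z₁Z₁*ξ = ξ and Z_iZ_i*ξ = 0 for i = 2, 3, 4. Let n, m, k, r, t ∈ ℕ with k + m + t = r + n and set v = Z₁^r (Z₁*)^t Z₂^k Z₃^m Z₄^n ξ. Let n₁, n₂, n₃, n₄, m₁, m₂, m₃, m₄ ∈ ℕ satisfy n₂ + n₃ + m₁ + m₄ = n₁ + n₄ + m₂ + m₃. If m₂ + k < n₂, or m₃ + m < n₃, or m₄ + n < n₄, then (Z₄*)^{n₄} (Z₃*)^{n₃} (Z₂*)^{n₂} (Z₁*)^{n₁} Z₁^{m₁} Z₂^{m₂} Z₃^{m₃} Z₄^{m₄} v = 0. -/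
inductive Grd {H : Type*} [NormedAddCommGroup H] [InnerProductSpace ℂ H] [CompleteSpace H]
    (z : Fin 4 → (H →L[ℂ] H)) (ξ : H) (j : Fin 4) : ℕ → H → Prop
  | base : Grd z ξ j 0 ξ
  | zero (d : ℕ) : Grd z ξ j d 0
  | add (d : ℕ) (x y : H) : Grd z ξ j d x → Grd z ξ j d y → Grd z ξ j d (x + y)
  | smul (d : ℕ) (c : ℂ) (x : H) : Grd z ξ j d x → Grd z ξ j d (c • x)
  | other (d : ℕ) (i : Fin 4) (x : H) : i ≠ j → Grd z ξ j d x → Grd z ξ j d (z i x)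
  | otherStar (d : ℕ) (i : Fin 4) (x : H) : i ≠ j → Grd z ξ j d x → Grd z ξ j d (star (z i) x)
  | up (d : ℕ) (x : H) : Grd z ξ j d x → Grd z ξ j (d + 1) (z j x)

section
variable {H : Type*} [NormedAddCommGroup H] [InnerProductSpace ℂ H] [CompleteSpace H]

def Low (z : Fin 4 → (H →L[ℂ] H)) (ξ : H) (j : Fin 4) : ℕ → H → Prop
  | 0, y => y = 0
  | d + 1, y => Grd z ξ j d y

theorem low_lin (z : Fin 4 → (H →L[ℂ] H)) (ξ : H) (j : Fin 4) (d : ℕ) :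
    Low z ξ j d 0 ∧ (∀ x y, Low z ξ j d x → Low z ξ j d y → Low z ξ j d (x + y)) ∧
    (∀ (c : ℂ) x, Low z ξ j d x → Low z ξ j d (c • x)) ∧
    (∀ i x, i ≠ j → Low z ξ j d x → Low z ξ j d (z i x)) ∧
    (∀ i x, i ≠ j → Low z ξ j d x → Low z ξ j d (star (z i) x)) ∧
    (∀ x, Low z ξ j d x → Grd z ξ j d (z j x)) := by
  cases d with
  | zero =>
    simp only [Low]
    refine ⟨trivial, ?_, ?_, ?_, ?_, ?_⟩
    · rintro x y rfl rfl; simp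
    · rintro c x rfl; simp
    · rintro i x _ rfl; simp
    · rintro i x _ rfl; simp
    · rintro x rfl
      rw [map_zero]; exact Grd.zero _
  | succ d =>
    exact ⟨Grd.zero _, Grd.add _, Grd.smul _, Grd.other _, Grd.otherStar _, Grd.up _⟩

theorem grd_low (q : ℝ) (hq : q ≠ 0) (z : Fin 4 → (H →L[ℂ] H)) (hz : VSRel q z) (ξ : H)
    (j : Fin 4) (hξ : star (z j) ξ = 0) (d : ℕ) (x : H) (h : Grd z ξ j d x) :
    Low z ξ j d (star (z j) x) := by
  obtain ⟨hA, hB, hC, -⟩ := hz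
  induction h with
  | base => exact hξ
  | zero d => rw [map_zero]; exact (low_lin z ξ j d).1
  | add d x y _ _ hx hy => rw [map_add]; exact (low_lin z ξ j d).2.1 _ _ hx hy
  | smul d c x _ hx => rw [map_smul]; exact (low_lin z ξ j d).2.2.1 _ _ hx
  | other d i x hij _ hx =>
    have := congrArg (fun T : H →L[ℂ] H => T x) (hB i j hij)
    simp only [mul_apply_eq_comp, ContinuousLinearMap.smul_apply] at this
    rw [this]
    exact (low_lin z ξ j d).2.2.1 _ _ ((low_lin z ξ j d).2.2.2.1 _ _ hij hx)
  | otherStar d i x hij _ hx =>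
    have key : ∃ c : ℂ, star (z j) (star (z i) x) = c • star (z i) (star (z j) x) := by
      rcases lt_or_gt_of_ne hij with h | h
      · have := congrArg (fun T : H →L[ℂ] H => (star T) x) (hA i j h)
        simp only [star_mul, star_smul, mul_apply_eq_comp,
          ContinuousLinearMap.smul_apply] at this
        exact ⟨_, this⟩
      · have := congrArg (fun T : H →L[ℂ] H => (star T) x) (hA j i h)
        simp only [star_mul, star_smul, mul_apply_eq_comp,
          ContinuousLinearMap.smul_apply] at this
        refine ⟨(star (q : ℂ))⁻¹, ?_⟩
        rw [this, smul_smul, inv_mul_cancel₀, one_smul]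
        simpa using hq
    obtain ⟨c, hc⟩ := key
    rw [hc]
    exact (low_lin z ξ j d).2.2.1 _ _ ((low_lin z ξ j d).2.2.2.2.1 _ _ hij hx)
  | up d x hd hx =>
    have := congrArg (fun T : H →L[ℂ] H => T x) (hC j)
    simp only [mul_apply_eq_comp, ContinuousLinearMap.smul_apply,
      ContinuousLinearMap.add_apply, ContinuousLinearMap.sum_apply] at this
    rw [this]
    refine Grd.add _ _ _ ((low_lin z ξ j d).2.2.2.2.2 _ hx) (Grd.smul _ _ _ ?_)
    refine Finset.sum_induction _ (Grd z ξ j d) (Grd.add d) (Grd.zero d) ?_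
    intro i hi
    have hij : i ≠ j := (Finset.mem_Iio.1 hi).ne
    exact Grd.other _ _ _ hij (Grd.otherStar _ _ _ hij hd)

theorem grd_kill (q : ℝ) (hq : q ≠ 0) (z : Fin 4 → (H →L[ℂ] H)) (hz : VSRel q z) (ξ : H)
    (j : Fin 4) (hξ : star (z j) ξ = 0) (N : ℕ) : ∀ (d : ℕ) (x : H), Grd z ξ j d x → d < N →
    (star (z j) ^ N) x = 0 := by
  induction N with
  | zero => intro d x _ h; omega
  | succ N ih =>
    intro d x hx hd
    have hl := grd_low q hq z hz ξ j hξ d x hx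
    rw [pow_succ, mul_apply_eq_comp]
    cases d with
    | zero =>
      have h0 : star (z j) x = 0 := hl
      rw [h0, map_zero]
    | succ d => exact ih d _ hl (by omega)

theorem grd_pow (z : Fin 4 → (H →L[ℂ] H)) (ξ : H) (j i : Fin 4) (N d : ℕ) (x : H)
    (h : Grd z ξ j d x) : Grd z ξ j (d + if i = j then N else 0) ((z i ^ N) x) := by
  induction N with
  | zero => simpa using h
  | succ N ih =>
    rw [pow_succ', mul_apply_eq_comp]
    by_cases hij : i = j
    · subst hij
      simp only [if_true] at ih ⊢
      exact Grd.up _ _ ih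
    · simp only [hij, if_false] at ih ⊢
      exact Grd.other _ _ _ hij ih

theorem grd_starpow (z : Fin 4 → (H →L[ℂ] H)) (ξ : H) (j i : Fin 4) (hij : i ≠ j) (N d : ℕ)
    (x : H) (h : Grd z ξ j d x) : Grd z ξ j d ((star (z i) ^ N) x) := by
  induction N with
  | zero => simpa using h
  | succ N ih =>
    rw [pow_succ', mul_apply_eq_comp]
    exact Grd.otherStar _ _ _ hij ih

theorem star_ker (T : H →L[ℂ] H) (x : H) (h : (T * star T) x = 0) : star T x = 0 := by
  have : inner ℂ (star T x) (star T x) = 0 := by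
    conv_lhs => rw [ContinuousLinearMap.star_eq_adjoint, ContinuousLinearMap.adjoint_inner_left]
    rw [← ContinuousLinearMap.star_eq_adjoint, ← mul_apply_eq_comp, h]
    simp
  exact inner_self_eq_zero.1 this
end

/-- Vanishing of the monomial `(Z₄*)^{n₄}(Z₃*)^{n₃}(Z₂*)^{n₂}(Z₁*)^{n₁}Z₁^{m₁}Z₂^{m₂}Z₃^{m₃}Z₄^{m₄}`
applied to `v = Z₁^r (Z₁*)^t Z₂^k Z₃^m Z₄^n ξ` when `m₂+k < n₂`, `m₃+m < n₃` or `m₄+n < n₄`. -/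
theorem monomial_vanishes_qSphere {H : Type*} [NormedAddCommGroup H] [InnerProductSpace ℂ H]
    [CompleteSpace H] (q : ℝ) (hq : q ∈ Set.Ioo (0 : ℝ) 1)
    (Z₁ Z₂ Z₃ Z₄ : H →L[ℂ] H) (hVS : VSRel q ![Z₁, Z₂, Z₃, Z₄]) (ξ : H)
    (h1 : (Z₁ * star Z₁) ξ = ξ) (h2 : (Z₂ * star Z₂) ξ = 0)
    (h3 : (Z₃ * star Z₃) ξ = 0) (h4 : (Z₄ * star Z₄) ξ = 0)
    (n m k r t : ℕ) (hrt : k + m + t = r + n) (v : H)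
    (hv : v = (Z₁ ^ r * (star Z₁) ^ t * Z₂ ^ k * Z₃ ^ m * Z₄ ^ n) ξ)
    (n₁ n₂ n₃ n₄ m₁ m₂ m₃ m₄ : ℕ)
    (hbal : n₂ + n₃ + m₁ + m₄ = n₁ + n₄ + m₂ + m₃)
    (hlt : m₂ + k < n₂ ∨ m₃ + m < n₃ ∨ m₄ + n < n₄) :
    ((star Z₄) ^ n₄ * (star Z₃) ^ n₃ * (star Z₂) ^ n₂ * (star Z₁) ^ n₁ *
        Z₁ ^ m₁ * Z₂ ^ m₂ * Z₃ ^ m₃ * Z₄ ^ m₄) v = 0 := by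

  have hq0 : q ≠ 0 := hq.1.ne'
  have e2 := star_ker _ _ h2
  have e3 := star_ker _ _ h3
  have e4 := star_ker _ _ h4
  clear h1 h2 h3 h4
  obtain ⟨z, hz⟩ : ∃ z, z = ![Z₁, Z₂, Z₃, Z₄] := ⟨_, rfl⟩
  rw [← hz] at hVS
  obtain rfl : z 0 = Z₁ := by rw [hz]; rfl
  obtain rfl : z 1 = Z₂ := by rw [hz]; rfl
  obtain rfl : z 2 = Z₃ := by rw [hz]; rfl
  obtain rfl : z 3 = Z₄ := by rw [hz]; rfl
  clear hz
  subst hv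
  simp only [mul_apply_eq_comp]
  have hw : ∀ j : Fin 4, j ≠ 0 → Grd z ξ j _ _ := fun j hj =>
    grd_starpow z ξ j 0 hj.symm n₁ _ _ <| grd_pow z ξ j 0 m₁ _ _ <| grd_pow z ξ j 1 m₂ _ _ <|
    grd_pow z ξ j 2 m₃ _ _ <| grd_pow z ξ j 3 m₄ _ _ <| grd_pow z ξ j 0 r _ _ <|
    grd_starpow z ξ j 0 hj.symm t _ _ <| grd_pow z ξ j 1 k _ _ <| grd_pow z ξ j 2 m _ _ <|
    grd_pow z ξ j 3 n _ _ Grd.base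
  rcases hlt with h | h | h
  · rw [grd_kill q hq0 z hVS ξ 1 e2 n₂ _ _ (hw 1 (by decide)) (by simp; omega)]
    simp
  · rw [grd_kill q hq0 z hVS ξ 2 e3 n₃ _ _ (grd_starpow z ξ 2 1 (by decide) n₂ _ _
      (hw 2 (by decide))) (by simp; omega)]
    simp
  · exact grd_kill q hq0 z hVS ξ 3 e4 n₄ _ _ (grd_starpow z ξ 3 2 (by decide) n₃ _ _
      (grd_starpow z ξ 3 1 (by decide) n₂ _ _ (hw 3 (by decide)))) (by simp; omega)
end

section
/- Let H be a complex Hilbert space, q ∈ (0,1), and Z₁, Z₂, Z₃, Z₄ bounded operators on H satisfying the Vaksman–Soibelman S_q^7 relations. Suppose ξ ∈ H satisfies Z₁Z₁*ξ = ξ and Z_iZ_i*ξ = 0 for i = 2, 3, 4. For n, m, k, r, t ∈ ℕ with k + m + t = r + n write v_{n,m,k} = Z₁^r (Z₁*)^t Z₂^k Z₃^m Z₄^n ξ. Let n₁, n₂, n₃, n₄, m₁, m₂, m₃, m₄ ∈ ℕ satisfy n₂ + n₃ + m₁ + m₄ = n₁ + n₄ + m₂ + m₃, and suppose m₂ + k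 ≥ n₂, m₃ + m ≥ n₃ and m₄ + n ≥ n₄. Then there exists a scalar c ∈ ℂ such that (Z₄*)^{n₄} (Z₃*)^{n₃} (Z₂*)^{n₂} (Z₁*)^{n₁} Z₁^{m₁} Z₂^{m₂} Z₃^{m₃} Z₄^{m₄} v_{n,m,k} = c · v_{m₄+n−n₄, m₃+m−n₃, m₂+k−n₂} (for any choice of the auxiliary exponents r', t' ∈ ℕ with (m₂+k−n₂) + (m₃+m−n₃) + t' = r' + (m₄+n−n₄) defining the right-hand vector). -/
set_option linter.unusedSectionVars false

namespace VSAux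

variable {H : Type*} [NormedAddCommGroup H] [InnerProductSpace ℂ H] [CompleteSpace H]

def Par (x y : H) : Prop := ∃ c : ℂ, x = c • y

theorem Par.rfl' (x : H) : Par x x := ⟨1, by simp⟩

theorem Par.trans' {x y z : H} (h : Par x y) (h' : Par y z) : Par x z := by
  obtain ⟨c, rfl⟩ := h
  obtain ⟨d, rfl⟩ := h'
  exact ⟨c * d, by rw [smul_smul]⟩

theorem Par.map' {x y : H} (h : Par x y) (A : H →L[ℂ] H) : Par (A x) (A y) := by
  obtain ⟨c, rfl⟩ := h
  exact ⟨c, by simp⟩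

def QC (A B : H →L[ℂ] H) : Prop := ∃ c : ℂ, c ≠ 0 ∧ A * B = c • (B * A)

theorem QC.symm' {A B : H →L[ℂ] H} (h : QC A B) : QC B A := by
  obtain ⟨c, hc, h⟩ := h
  exact ⟨c⁻¹, inv_ne_zero hc, by rw [h, smul_smul, inv_mul_cancel₀ hc, one_smul]⟩

theorem QC.pow' {A B : H →L[ℂ] H} (h : QC A B) (n : ℕ) : QC A (B ^ n) := by
  obtain ⟨c, hc, h⟩ := h
  refine ⟨c ^ n, pow_ne_zero _ hc, ?_⟩
  induction n with
  | zero => simp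
  | succ n ih =>
    rw [pow_succ, ← mul_assoc, ih, smul_mul_assoc, mul_assoc, h, mul_smul_comm, smul_smul,
      mul_assoc, pow_succ]

theorem QC.mul_left' {A B C : H →L[ℂ] H} (h : QC A C) (h' : QC B C) : QC (A * B) C := by
  obtain ⟨c, hc, h⟩ := h
  obtain ⟨d, hd, h'⟩ := h'
  refine ⟨d * c, mul_ne_zero hd hc, ?_⟩
  rw [mul_assoc, h', mul_smul_comm, ← mul_assoc, h, smul_mul_assoc, smul_smul, mul_assoc]

theorem QC.star' {A B : H →L[ℂ] H} (h : QC A B) : QC (star A) (star B) := by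
  obtain ⟨c, hc, h⟩ := h
  refine QC.symm' ⟨star c, by simpa using hc, ?_⟩
  rw [← star_mul, h, star_smul, star_mul]

theorem QC.par' {A B : H →L[ℂ] H} (h : QC A B) (x : H) : Par (A (B x)) (B (A x)) := by
  obtain ⟨c, hc, h⟩ := h
  exact ⟨c, by simpa using congrArg (fun T : H →L[ℂ] H => T x) h⟩

/-- eigenvectors with nonzero eigenvalue -/
def Eig (S : H →L[ℂ] H) (x : H) : Prop := ∃ c : ℂ, c ≠ 0 ∧ S x = c • x

theorem Eig.map' {S B : H →L[ℂ] H} {x : H} (hx : Eig S x) (h : QC S B) : Eig S (B x) := by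
  obtain ⟨c, hc, h⟩ := h
  obtain ⟨d, hd, hx⟩ := hx
  refine ⟨c * d, mul_ne_zero hc hd, ?_⟩
  have := congrArg (fun T : H →L[ℂ] H => T x) h
  simp only [mul_apply_eq_comp, smul_apply] at this
  rw [this, hx, map_smul, smul_smul]

theorem kill {A B : H →L[ℂ] H} {x : H} (h : QC A B) (hx : A x = 0) : A (B x) = 0 := by
  obtain ⟨c, h⟩ := h.par' x
  rw [h, hx]; simp

theorem lower {Z S : H →L[ℂ] H} {x : H} {s : ℂ} (hZ : star Z * Z = Z * star Z + s • S)
    (hS : QC S Z) (hx : star Z x = 0) (hSx : Eig S x) (j : ℕ) :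
    Par (star Z ((Z ^ (j + 1)) x)) ((Z ^ j) x) := by
  have key : ∀ y, star Z (Z y) = Z (star Z y) + s • S y := fun y => by
    simpa using congrArg (fun T : H →L[ℂ] H => T y) hZ
  induction j with
  | zero =>
    obtain ⟨d, hd, hSx⟩ := hSx
    exact ⟨s * d, by simp [key, hx, hSx, smul_smul]⟩
  | succ j ih =>
    obtain ⟨c, ih⟩ := ih
    obtain ⟨d, hd, hS'⟩ := hSx.map' (hS.pow' (j + 1))
    refine ⟨c + s * d, ?_⟩
    rw [pow_succ' Z (j + 1), mul_apply_eq_comp, key, ih, hS', map_smul, pow_succ' Z j,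
      mul_apply_eq_comp, smul_smul, add_smul]

theorem star_kill {Z : H →L[ℂ] H} {x : H} (h : (Z * star Z) x = 0) : star Z x = 0 := by
  have h1 : inner ℂ (star Z x) (star Z x) = inner ℂ x (Z (star Z x)) := by
    rw [ContinuousLinearMap.star_eq_adjoint, ContinuousLinearMap.adjoint_inner_left]
  rw [mul_apply_eq_comp] at h
  rw [h, inner_zero_right] at h1
  exact inner_self_eq_zero.mp h1

/-- iterating a one-step shift upwards -/
theorem iter_up {A : H →L[ℂ] H} {f : ℕ → H} (h : ∀ a, Par (A (f a)) (f (a + 1))) (j a : ℕ) :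
    Par ((A ^ j) (f a)) (f (j + a)) := by
  induction j with
  | zero => simpa using Par.rfl' _
  | succ j ih =>
    rw [pow_succ', mul_apply_eq_comp, show j + 1 + a = j + a + 1 by ring]
    exact (ih.map' A).trans' (h _)

theorem iter_down {A : H →L[ℂ] H} {f : ℕ → H} (h : ∀ a, Par (A (f (a + 1))) (f a)) (j a : ℕ)
    (hj : j ≤ a) : Par ((A ^ j) (f a)) (f (a - j)) := by
  induction j with
  | zero => simpa using Par.rfl' _
  | succ j ih =>
    rw [pow_succ', mul_apply_eq_comp]
    refine ((ih (by omega)).map' A).trans' ?_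
    rw [show a - j = a - (j + 1) + 1 by omega]
    exact h _

end VSAux

open VSAux

/-- The monomial `(Z₄*)^{n₄}(Z₃*)^{n₃}(Z₂*)^{n₂}(Z₁*)^{n₁}Z₁^{m₁}Z₂^{m₂}Z₃^{m₃}Z₄^{m₄}`
maps `v_{n,m,k}` to a scalar multiple of `v_{m₄+n-n₄, m₃+m-n₃, m₂+k-n₂}`. -/
theorem monomial_maps_eigenvectors_qSphere {H : Type*} [NormedAddCommGroup H]
    [InnerProductSpace ℂ H] [CompleteSpace H] (q : ℝ) (hq : q ∈ Set.Ioo (0 : ℝ) 1)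
    (Z₁ Z₂ Z₃ Z₄ : H →L[ℂ] H) (hVS : VSRel q ![Z₁, Z₂, Z₃, Z₄]) (ξ : H)
    (h1 : (Z₁ * star Z₁) ξ = ξ) (h2 : (Z₂ * star Z₂) ξ = 0)
    (h3 : (Z₃ * star Z₃) ξ = 0) (h4 : (Z₄ * star Z₄) ξ = 0)
    (n m k r t : ℕ) (hrt : k + m + t = r + n)
    (n₁ n₂ n₃ n₄ m₁ m₂ m₃ m₄ : ℕ)
    (hbal : n₂ + n₃ + m₁ + m₄ = n₁ + n₄ + m₂ + m₃)
    (h2' : n₂ ≤ m₂ + k) (h3' : n₃ ≤ m₃ + m) (h4' : n₄ ≤ m₄ + n) :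
    ∀ r' t' : ℕ,
      (m₂ + k - n₂) + (m₃ + m - n₃) + t' = r' + (m₄ + n - n₄) →
      ∃ c : ℂ,
        ((star Z₄) ^ n₄ * (star Z₃) ^ n₃ * (star Z₂) ^ n₂ * (star Z₁) ^ n₁ *
            Z₁ ^ m₁ * Z₂ ^ m₂ * Z₃ ^ m₃ * Z₄ ^ m₄)
          ((Z₁ ^ r * (star Z₁) ^ t * Z₂ ^ k * Z₃ ^ m * Z₄ ^ n) ξ)
        = c • ((Z₁ ^ r' * (star Z₁) ^ t' * Z₂ ^ (m₂ + k - n₂) * Z₃ ^ (m₃ + m - n₃) *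
            Z₄ ^ (m₄ + n - n₄)) ξ) := by
  intro r' t' hrt'
  obtain ⟨hlt, hne, hkk, -⟩ := hVS
  have hq0 : (q : ℂ) ≠ 0 := by exact_mod_cast hq.1.ne'
  have q12 : QC Z₁ Z₂ := ⟨q, hq0, hlt 0 1 (by decide)⟩
  have q13 : QC Z₁ Z₃ := ⟨q, hq0, hlt 0 2 (by decide)⟩
  have q14 : QC Z₁ Z₄ := ⟨q, hq0, hlt 0 3 (by decide)⟩
  have q23 : QC Z₂ Z₃ := ⟨q, hq0, hlt 1 2 (by decide)⟩
  have q24 : QC Z₂ Z₄ := ⟨q, hq0, hlt 1 3 (by decide)⟩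
  have q34 : QC Z₃ Z₄ := ⟨q, hq0, hlt 2 3 (by decide)⟩
  have s12 : QC (star Z₁) Z₂ := ⟨q, hq0, hne 1 0 (by decide)⟩
  have s13 : QC (star Z₁) Z₃ := ⟨q, hq0, hne 2 0 (by decide)⟩
  have s14 : QC (star Z₁) Z₄ := ⟨q, hq0, hne 3 0 (by decide)⟩
  have s21 : QC (star Z₂) Z₁ := ⟨q, hq0, hne 0 1 (by decide)⟩
  have s23 : QC (star Z₂) Z₃ := ⟨q, hq0, hne 2 1 (by decide)⟩
  have s24 : QC (star Z₂) Z₄ := ⟨q, hq0, hne 3 1 (by decide)⟩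
  have s31 : QC (star Z₃) Z₁ := ⟨q, hq0, hne 0 2 (by decide)⟩
  have s32 : QC (star Z₃) Z₂ := ⟨q, hq0, hne 1 2 (by decide)⟩
  have s34 : QC (star Z₃) Z₄ := ⟨q, hq0, hne 3 2 (by decide)⟩
  have s41 : QC (star Z₄) Z₁ := ⟨q, hq0, hne 0 3 (by decide)⟩
  have s42 : QC (star Z₄) Z₂ := ⟨q, hq0, hne 1 3 (by decide)⟩
  have s43 : QC (star Z₄) Z₃ := ⟨q, hq0, hne 2 3 (by decide)⟩
  have I0 : Finset.Iio (0 : Fin 4) = ∅ := by decide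
  have I1 : Finset.Iio (1 : Fin 4) = {0} := by decide
  have I2 : Finset.Iio (2 : Fin 4) = {0, 1} := by decide
  have I3 : Finset.Iio (3 : Fin 4) = {0, 1, 2} := by decide
  have k1 : star Z₁ * Z₁ = Z₁ * star Z₁ := by simpa [I0] using hkk 0
  have k2 : star Z₂ * Z₂ = Z₂ * star Z₂ + (1 - (q : ℂ) ^ 2) • (Z₁ * star Z₁) := by
    simpa [I1] using hkk 1
  have k3 : star Z₃ * Z₃ = Z₃ * star Z₃ +
      (1 - (q : ℂ) ^ 2) • (Z₁ * star Z₁ + Z₂ * star Z₂) := by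
    have := hkk 2
    rw [I2, Finset.sum_insert (by decide), Finset.sum_singleton] at this
    exact this
  have k4 : star Z₄ * Z₄ = Z₄ * star Z₄ +
      (1 - (q : ℂ) ^ 2) • (Z₁ * star Z₁ + (Z₂ * star Z₂ + Z₃ * star Z₃)) := by
    have := hkk 3
    rw [I3, Finset.sum_insert (by decide), Finset.sum_insert (by decide),
      Finset.sum_singleton] at this
    exact this
  have q11 : QC (star Z₁) Z₁ := ⟨1, one_ne_zero, by rw [k1, one_smul]⟩
  -- exact scaling of `Zᵢ Zᵢ*` past `Zⱼ`, `i < j`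
  have ex : ∀ i j : Fin 4, i < j → ∀ A B : H →L[ℂ] H, ![Z₁, Z₂, Z₃, Z₄] i = A →
      ![Z₁, Z₂, Z₃, Z₄] j = B → (A * star A) * B = ((q : ℂ) * q) • (B * (A * star A)) := by
    rintro i j hij A B rfl rfl
    rw [mul_assoc, hne j i hij.ne', mul_smul_comm, ← mul_assoc, hlt i j hij, smul_mul_assoc,
      smul_smul, mul_assoc]
  have hqq : (q : ℂ) * q ≠ 0 := mul_ne_zero hq0 hq0
  have S2 : QC (Z₁ * star Z₁) Z₂ := ⟨_, hqq, ex 0 1 (by decide) Z₁ Z₂ rfl rfl⟩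
  have S3 : QC (Z₁ * star Z₁ + Z₂ * star Z₂) Z₃ := ⟨_, hqq, by
    rw [add_mul, ex 0 2 (by decide) Z₁ Z₃ rfl rfl, ex 1 2 (by decide) Z₂ Z₃ rfl rfl, ← smul_add,
      mul_add]⟩
  have S4 : QC (Z₁ * star Z₁ + (Z₂ * star Z₂ + Z₃ * star Z₃)) Z₄ := ⟨_, hqq, by
    rw [add_mul, add_mul, ex 0 3 (by decide) Z₁ Z₄ rfl rfl, ex 1 3 (by decide) Z₂ Z₄ rfl rfl,
      ex 2 3 (by decide) Z₃ Z₄ rfl rfl, ← smul_add, ← smul_add, mul_add, mul_add]⟩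
  have S3' : QC (Z₁ * star Z₁ + Z₂ * star Z₂) Z₄ := ⟨_, hqq, by
    rw [add_mul, ex 0 3 (by decide) Z₁ Z₄ rfl rfl, ex 1 3 (by decide) Z₂ Z₄ rfl rfl, ← smul_add,
      mul_add]⟩
  have T3 : QC (Z₁ * star Z₁) Z₃ := ⟨_, hqq, ex 0 2 (by decide) Z₁ Z₃ rfl rfl⟩
  have T4 : QC (Z₁ * star Z₁) Z₄ := ⟨_, hqq, ex 0 3 (by decide) Z₁ Z₄ rfl rfl⟩
  have x2 := star_kill h2
  have x3 := star_kill h3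
  have x4 := star_kill h4
  have e1 : Eig (Z₁ * star Z₁) ξ := ⟨1, one_ne_zero, by rw [h1, one_smul]⟩
  have e3 : Eig (Z₁ * star Z₁ + Z₂ * star Z₂) ξ := ⟨1, one_ne_zero, by
    rw [ContinuousLinearMap.add_apply, h1, h2, one_smul, add_zero]⟩
  have e4 : Eig (Z₁ * star Z₁ + (Z₂ * star Z₂ + Z₃ * star Z₃)) ξ := ⟨1, one_ne_zero, by
    rw [ContinuousLinearMap.add_apply, ContinuousLinearMap.add_apply, h1, h2, h3, one_smul,
      add_zero, add_zero]⟩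
  let W : ℕ → ℕ → ℕ → ℕ → ℕ → H := fun a b k m n =>
    (Z₁ ^ a) ((star Z₁ ^ b) ((Z₂ ^ k) ((Z₃ ^ m) ((Z₄ ^ n) ξ))))
  have u1 : ∀ a b k m n, Par (Z₁ (W a b k m n)) (W (a + 1) b k m n) := by
    intro a b k m n
    simp only [W, pow_succ', mul_apply_eq_comp]
    exact Par.rfl' _
  have us1 : ∀ a b k m n, Par (star Z₁ (W a b k m n)) (W a (b + 1) k m n) := by
    intro a b k m n
    simp only [W, pow_succ' (star Z₁), mul_apply_eq_comp]
    exact (q11.pow' a).par' _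
  -- moving an operator past `Z₁ ^ a (Z₁*) ^ b`
  have pass : ∀ A : H →L[ℂ] H, QC A Z₁ → QC A (star Z₁) → ∀ a b x y, Par (A x) y →
      Par (A ((Z₁ ^ a) ((star Z₁ ^ b) x))) ((Z₁ ^ a) ((star Z₁ ^ b) y)) := by
    intro A h h' a b x y hxy
    exact ((h.pow' a).par' _).trans'
      ((((h'.pow' b).par' _).trans' (hxy.map' _)).map' _)
  have pass1 : ∀ A B : H →L[ℂ] H, QC A B → ∀ a x y, Par (A x) y →
      Par (A ((B ^ a) x)) ((B ^ a) y) := by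
    intro A B h a x y hxy
    exact ((h.pow' a).par' _).trans' (hxy.map' _)
  have up : ∀ (A : H →L[ℂ] H) a x, Par (A ((A ^ a) x)) ((A ^ (a + 1)) x) := by
    intro A a x
    rw [pow_succ', mul_apply_eq_comp]
    exact Par.rfl' _
  have u2 : ∀ a b k m n, Par (Z₂ (W a b k m n)) (W a b (k + 1) m n) := fun a b k m n =>
    pass _ q12.symm' s12.symm' _ _ _ _ (up _ _ _)
  have u3 : ∀ a b k m n, Par (Z₃ (W a b k m n)) (W a b k (m + 1) n) := fun a b k m n =>
    pass _ q13.symm' s13.symm' _ _ _ _ (pass1 _ _ q23.symm' _ _ _ (up _ _ _))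
  have u4 : ∀ a b k m n, Par (Z₄ (W a b k m n)) (W a b k m (n + 1)) := fun a b k m n =>
    pass _ q14.symm' s14.symm' _ _ _ _ (pass1 _ _ q24.symm' _ _ _
      (pass1 _ _ q34.symm' _ _ _ (up _ _ _)))
  have d2 : ∀ a b k m n, Par (star Z₂ (W a b (k + 1) m n)) (W a b k m n) := fun a b k m n =>
    pass _ s21 q12.star'.symm' _ _ _ _ (lower k2 S2
      (kill (s23.pow' m) (kill (s24.pow' n) x2))
      ((e1.map' (T4.pow' n)).map' (T3.pow' m)) k)
  have d3 : ∀ a b k m n, Par (star Z₃ (W a b k (m + 1) n)) (W a b k m n) := fun a b k m n =>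
    pass _ s31 q13.star'.symm' _ _ _ _ (pass1 _ _ s32 _ _ _ (lower k3 S3
      (kill (s34.pow' n) x3) (e3.map' (S3'.pow' n)) m))
  have d4 : ∀ a b k m n, Par (star Z₄ (W a b k m (n + 1))) (W a b k m n) := fun a b k m n =>
    pass _ s41 q14.star'.symm' _ _ _ _ (pass1 _ _ s42 _ _ _ (pass1 _ _ s43 _ _ _
      (lower k4 S4 x4 e4 n)))
  -- changing the auxiliary exponents
  have step : ∀ a b k m n, Par (W (a + 1) (b + 1) k m n) (W a b k m n) ∧
      Par (W a b k m n) (W (a + 1) (b + 1) k m n) := by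
    intro a b k m n
    obtain ⟨c, hc, h⟩ := ((e1.map' (T4.pow' n)).map' (T3.pow' m)).map' (S2.pow' k)
    have hcomm : Commute Z₁ (star Z₁) := k1.symm
    have hW : W (a + 1) (b + 1) k m n = c • W a b k m n := by
      have : Z₁ ^ (a + 1) * star Z₁ ^ (b + 1) = Z₁ ^ a * star Z₁ ^ b * (Z₁ * star Z₁) := by
        rw [pow_succ, pow_succ, mul_assoc, ← mul_assoc Z₁, (hcomm.pow_right b).eq]
        simp only [mul_assoc]
      have h' := congrArg (fun T : H →L[ℂ] H => T ((Z₂ ^ k) ((Z₃ ^ m) ((Z₄ ^ n) ξ)))) this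
      simp only [mul_apply_eq_comp] at h' h
      simp only [W]
      rw [h', h, map_smul, map_smul]
    exact ⟨⟨c, hW⟩, ⟨c⁻¹, by rw [hW, smul_smul, inv_mul_cancel₀ hc, one_smul]⟩⟩
  have steps : ∀ j a b k m n, Par (W (a + j) (b + j) k m n) (W a b k m n) ∧
      Par (W a b k m n) (W (a + j) (b + j) k m n) := by
    intro j a b k m n
    induction j with
    | zero => exact ⟨Par.rfl' _, Par.rfl' _⟩
    | succ j ih =>
      exact ⟨(step (a + j) (b + j) k m n).1.trans' ih.1,
        ih.2.trans' (step (a + j) (b + j) k m n).2⟩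
  have change : ∀ a b a' b' k m n, a + b' = a' + b → Par (W a b k m n) (W a' b' k m n) := by
    intro a b a' b' k m n h
    have h1 := (steps b' a b k m n).2
    rw [h, add_comm b b'] at h1
    exact h1.trans' (steps b a' b' k m n).1
  have fin : Par ((star Z₄ ^ n₄) ((star Z₃ ^ n₃) ((star Z₂ ^ n₂) ((star Z₁ ^ n₁) ((Z₁ ^ m₁)
      ((Z₂ ^ m₂) ((Z₃ ^ m₃) ((Z₄ ^ m₄) (W r t k m n)))))))))
      (W r' t' (m₂ + k - n₂) (m₃ + m - n₃) (m₄ + n - n₄)) := by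
    have p1 := iter_up (f := fun n => W r t k m n) (fun n => u4 r t k m n) m₄ n
    have p2 := (p1.map' (Z₃ ^ m₃)).trans'
      (iter_up (f := fun m => W r t k m (m₄ + n)) (fun m => u3 _ _ _ m _) m₃ m)
    have p3 := (p2.map' (Z₂ ^ m₂)).trans'
      (iter_up (f := fun k => W r t k (m₃ + m) (m₄ + n)) (fun k => u2 _ _ k _ _) m₂ k)
    have p4 := (p3.map' (Z₁ ^ m₁)).trans'
      (iter_up (f := fun r => W r t (m₂ + k) (m₃ + m) (m₄ + n)) (fun r => u1 r _ _ _ _) m₁ r)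
    have p5 := (p4.map' (star Z₁ ^ n₁)).trans'
      (iter_up (f := fun t => W (m₁ + r) t (m₂ + k) (m₃ + m) (m₄ + n))
        (fun t => us1 _ t _ _ _) n₁ t)
    have p6 := (p5.map' (star Z₂ ^ n₂)).trans'
      (iter_down (f := fun k => W (m₁ + r) (n₁ + t) k (m₃ + m) (m₄ + n))
        (fun k => d2 _ _ k _ _) n₂ (m₂ + k) h2')
    have p7 := (p6.map' (star Z₃ ^ n₃)).trans'
      (iter_down (f := fun m => W (m₁ + r) (n₁ + t) (m₂ + k - n₂) m (m₄ + n))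
        (fun m => d3 _ _ _ m _) n₃ (m₃ + m) h3')
    have p8 := (p7.map' (star Z₄ ^ n₄)).trans'
      (iter_down (f := fun n => W (m₁ + r) (n₁ + t) (m₂ + k - n₂) (m₃ + m - n₃) n)
        (fun n => d4 _ _ _ _ n) n₄ (m₄ + n) h4')
    exact p8.trans' (change _ _ _ _ _ _ _ (by omega))
  exact fin
end

section
/- Let A be a unital *-algebra over ℂ, q ∈ (0,1), and z₁, z₂, z₃, z₄ ∈ A elements satisfying the Vaksman–Soibelman S_q^7 relations. Define real coefficients c_{j₁,j₂,j₃,j₄}(N) for multi-indices (j₁,j₂,j₃,j₄) ∈ ℕ⁴ with j₁+j₂+j₃+j₄ = N by c_{0,0,0,0}(0) = 1 and the recursion c_{j₁,j₂,j₃,j₄}(N+1) = q⁴q^{2(j₂+j₃−j₄)} c_{j₁−1,j₂,j₃,j₄}(N) + q²q^{2(j₃−j₄)} c_{j₁,j₂−1,j₃,j₄}(N) + q^{−2j₄} c_{j₁,j₂,j₃−1,j₄}(N) + c_{j₁,j₂,j₃,j₄−1}(N), where any term with a negative index is 0. Then for every N ∈ ℕ, ∑_{j₁+j₂+j₃+j₄=N}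 c_{j₁,j₂,j₃,j₄}(N) · (z₁^{j₁}(z₂*)^{j₂}(z₃*)^{j₃}z₄^{j₄}) (z₁^{j₁}(z₂*)^{j₂}(z₃*)^{j₃}z₄^{j₄})* = 1. -/
/-- The recursively defined coefficients `c_{j₁,j₂,j₃,j₄}(N)`: `c_{0,0,0,0}(0) = 1`,
any coefficient with a negative index vanishes, and
`c_{j₁,j₂,j₃,j₄}(N+1) = q⁴q^{2(j₂+j₃-j₄)} c_{j₁-1,j₂,j₃,j₄}(N)
  + q²q^{2(j₃-j₄)} c_{j₁,j₂-1,j₃,j₄}(N) + q^{-2j₄} c_{j₁,j₂,j₃-1,j₄}(N)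
  + c_{j₁,j₂,j₃,j₄-1}(N)`. -/
noncomputable def coef (q : ℝ) : ℕ → ℤ → ℤ → ℤ → ℤ → ℝ
  | 0, j₁, j₂, j₃, j₄ => if j₁ = 0 ∧ j₂ = 0 ∧ j₃ = 0 ∧ j₄ = 0 then 1 else 0
  | N + 1, j₁, j₂, j₃, j₄ =>
      q ^ 4 * q ^ (2 * (j₂ + j₃ - j₄)) * coef q N (j₁ - 1) j₂ j₃ j₄
        + q ^ 2 * q ^ (2 * (j₃ - j₄)) * coef q N j₁ (j₂ - 1) j₃ j₄
        + q ^ (-2 * j₄) * coef q N j₁ j₂ (j₃ - 1) j₄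
        + coef q N j₁ j₂ j₃ (j₄ - 1)

section helpers
variable {A : Type*} [Ring A] [Algebra ℂ A] [StarRing A]

theorem starC_comm (t : ℂ) (y : A) :
    star (algebraMap ℂ A t) * y = y * star (algebraMap ℂ A t) := by
  have h := congrArg star (Algebra.commutes t (star y))
  simpa using h.symm

theorem star_smulC (t : ℂ) (y : A) :
    star (t • y) = star (algebraMap ℂ A t) * star y := by
  rw [Algebra.smul_def, star_mul, starC_comm]

theorem starC_fix {q : ℂ} (hq : 1 - q ^ 2 ≠ 0) {x w : A}
    (h1 : x * w = q • (w * x)) (h2 : star w * x = q • (x * star w))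
    (h3 : star x * w = q • (w * star x))
    (h4 : star w * w = w * star w + (1 - q ^ 2) • (1 - w * star w)) :
    star (algebraMap ℂ A q) * x = q • x := by
  have e1 := congrArg star h3
  rw [star_smulC] at e1
  simp only [star_mul, star_star] at e1
  rw [h2] at e1
  set S := star (algebraMap ℂ A q) with hS
  have hc : ∀ y : A, S * y = y * S := starC_comm q
  have e2 : (S * x - q • x) * star w = 0 := by
    rw [sub_mul, smul_mul_assoc, e1, mul_assoc, sub_self]
  have e3 : (S * x - q • x) * w = q • (w * (S * x - q • x)) := by
    rw [sub_mul, mul_assoc, h1, mul_sub, ← mul_assoc w, ← hc w, mul_assoc S w]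
    simp only [smul_mul_assoc, mul_smul_comm, h1, smul_sub]
  have e4 : (S * x - q • x) * (star w * w) = 0 := by rw [← mul_assoc, e2, zero_mul]
  have e5 : (S * x - q • x) * (w * star w) = 0 := by
    rw [← mul_assoc, e3, smul_mul_assoc, mul_assoc, e2, mul_zero, smul_zero]
  rw [h4, mul_add, e5, mul_smul_comm, mul_sub, e5, zero_add, sub_zero, mul_one] at e4
  exact sub_eq_zero.1 ((smul_eq_zero_iff_right hq).1 e4)

theorem starC_fix_star {q : ℂ} {x : A}
    (h : star (algebraMap ℂ A q) * x = q • x) :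
    star (algebraMap ℂ A q) * star x = q • star x := by
  have := congrArg star h
  rw [star_smulC, star_mul, star_star, ← Algebra.commutes, ← Algebra.smul_def] at this
  exact this.symm

theorem starC_fix_zpow {q : ℂ} (hq : q ≠ 0) {x : A}
    (h : star (algebraMap ℂ A q) * x = q • x) (n : ℤ) :
    star (algebraMap ℂ A (q ^ n)) * x = (q ^ n) • x := by
  have hinv : star (algebraMap ℂ A q⁻¹) * x = q⁻¹ • x := by
    have e : star (algebraMap ℂ A q⁻¹) * star (algebraMap ℂ A q) = 1 := by
      rw [← star_mul, ← map_mul, mul_inv_cancel₀ hq, map_one, star_one]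
    have : star (algebraMap ℂ A q⁻¹) * (q • x) = x := by
      rw [← h, ← mul_assoc, e, one_mul]
    rw [mul_smul_comm] at this
    rw [eq_inv_smul_iff₀ hq, this]
  induction n using Int.induction_on with
  | zero => simp
  | succ n ih =>
    rw [zpow_add_one₀ hq, map_mul, star_mul, mul_assoc, ih, mul_smul_comm, h, smul_smul]
  | pred n ih =>
    rw [zpow_sub_one₀ hq, map_mul, star_mul, mul_assoc, ih, mul_smul_comm, hinv, smul_smul]

theorem sq_term {q : ℂ} (hq : q ≠ 0) {x : A}
    (h : star (algebraMap ℂ A q) * x = q • x) (n : ℤ) (m u w : A)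
    (hm : m * x = q ^ n • (u * x * w)) :
    m * (x * star x) * star m = q ^ (2 * n) • ((u * x * w) * star (u * x * w)) := by
  have e : m * (x * star x) * star m = (m * x) * star (m * x) := by
    simp only [star_mul, mul_assoc]
  have e2 : u * x * w * star (algebraMap ℂ A (q ^ n)) = q ^ n • (u * x * w) := by
    rw [← starC_comm, ← mul_assoc, ← mul_assoc, starC_comm, mul_assoc u,
      starC_fix_zpow hq h, mul_smul_comm, smul_mul_assoc]
  rw [e, hm, star_smulC, smul_mul_assoc, ← mul_assoc, e2, smul_mul_assoc, smul_smul,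
    ← zpow_add₀ hq, two_mul]

theorem qpow_comm {q : ℂ} (hq : q ≠ 0) {x y : A} {n : ℤ} (h : y * x = q ^ n • (x * y)) (k : ℕ) :
    y ^ k * x = q ^ (n * k) • (x * y ^ k) := by
  induction k with
  | zero => simp
  | succ k ih =>
    rw [pow_succ, mul_assoc, h, mul_smul_comm, ← mul_assoc, ih, smul_mul_assoc, smul_smul,
      ← zpow_add₀ hq, mul_assoc]
    congr 2
    push_cast; ring

theorem sum_shift (N : ℕ) (i : Fin 4) (f : (Fin 4 → ℕ) → A) (hf : ∀ j, j i = 0 → f j = 0) :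
    ∑ j ∈ Finset.Nat.antidiagonalTuple 4 (N + 1), f j
      = ∑ j ∈ Finset.Nat.antidiagonalTuple 4 N, f (j + Pi.single i 1) := by
  symm
  apply Finset.sum_of_injOn (fun j => j + Pi.single i 1)
  · intro a _ b _ h
    exact add_right_cancel h
  · intro j hj
    simp only [Finset.mem_coe, Finset.Nat.mem_antidiagonalTuple] at hj ⊢
    simp [Finset.sum_add_distrib, hj]
  · intro j hj hn
    apply hf
    by_contra h0
    apply hn
    have hle : Pi.single i 1 ≤ j := by
      intro k
      by_cases hk : k = i
      · subst hk; simp; omega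
      · simp [hk]
    refine ⟨j - Pi.single i 1, ?_, tsub_add_cancel_of_le hle⟩
    simp only [Finset.mem_coe, Finset.Nat.mem_antidiagonalTuple] at hj ⊢
    have : ∑ k, ((j - Pi.single i 1) + Pi.single i 1 : Fin 4 → ℕ) k = N + 1 := by
      rw [tsub_add_cancel_of_le hle, hj]
    simpa [Finset.sum_add_distrib] using this
  · intro j _
    rfl

theorem coef_neg (q : ℝ) (N : ℕ) : ∀ a b c d : ℤ, (a < 0 ∨ b < 0 ∨ c < 0 ∨ d < 0) →
    coef q N a b c d = 0 := by
  induction N with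
  | zero =>
    intro a b c d h
    rw [coef, if_neg]
    omega
  | succ N ih =>
    intro a b c d h
    rw [coef, ih (a - 1) b c d (by omega), ih a (b - 1) c d (by omega),
      ih a b (c - 1) d (by omega), ih a b c (d - 1) (by omega)]
    simp

theorem step_term {q : ℂ} (hq : q ≠ 0) (x y v w : A)
    (hx : star (algebraMap ℂ A q) * x = q • x)
    (hy : star (algebraMap ℂ A q) * y = q • y)
    (hv : star (algebraMap ℂ A q) * v = q • v)
    (yx : y * x = q ^ (1 : ℤ) • (x * y)) (vx : v * x = q ^ (1 : ℤ) • (x * v))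
    (wx : w * x = q ^ (-1 : ℤ) • (x * w)) (vy : v * y = q ^ (1 : ℤ) • (y * v))
    (wy : w * y = q ^ (-1 : ℤ) • (y * w)) (wv : w * v = q ^ (-1 : ℤ) • (v * w))
    (h1 : q ^ 4 • (x * star x) + q ^ 2 • (y * star y) + v * star v + w * star w = 1)
    (a b c d : ℕ) :
    (x ^ a * y ^ b * v ^ c * w ^ d) * star (x ^ a * y ^ b * v ^ c * w ^ d) =
      (q ^ 4 * q ^ (2 * ((b : ℤ) + c - d))) •
        ((x ^ (a + 1) * y ^ b * v ^ c * w ^ d) * star (x ^ (a + 1) * y ^ b * v ^ c * w ^ d)) +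
      (q ^ 2 * q ^ (2 * ((c : ℤ) - d))) •
        ((x ^ a * y ^ (b + 1) * v ^ c * w ^ d) * star (x ^ a * y ^ (b + 1) * v ^ c * w ^ d)) +
      q ^ (-2 * (d : ℤ)) •
        ((x ^ a * y ^ b * v ^ (c + 1) * w ^ d) * star (x ^ a * y ^ b * v ^ (c + 1) * w ^ d)) +
      ((x ^ a * y ^ b * v ^ c * w ^ (d + 1)) * star (x ^ a * y ^ b * v ^ c * w ^ (d + 1))) := by
  set m := x ^ a * y ^ b * v ^ c * w ^ d with hm
  have t1 := sq_term hq hx ((b : ℤ) + c - d) m (x ^ a) (y ^ b * v ^ c * w ^ d) (by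
    rw [hm, mul_assoc, qpow_comm hq wx d, mul_smul_comm, ← mul_assoc, mul_assoc _ _ x,
      qpow_comm hq vx c, mul_smul_comm, ← mul_assoc, mul_assoc _ _ x,
      qpow_comm hq yx b]
    simp only [mul_smul_comm, smul_mul_assoc, smul_smul, ← zpow_add₀ hq, mul_assoc]
    congr 2; ring)
  have t2 := sq_term hq hy ((c : ℤ) - d) m (x ^ a * y ^ b) (v ^ c * w ^ d) (by
    rw [hm, mul_assoc, qpow_comm hq wy d, mul_smul_comm, ← mul_assoc, mul_assoc _ _ y,
      qpow_comm hq vy c]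
    simp only [mul_smul_comm, smul_mul_assoc, smul_smul, ← zpow_add₀ hq, mul_assoc]
    congr 2; ring)
  have t3 := sq_term hq hv (-(d : ℤ)) m (x ^ a * y ^ b * v ^ c) (w ^ d) (by
    rw [hm, mul_assoc, qpow_comm hq wv d]
    simp only [mul_smul_comm, mul_assoc]
    congr 2; ring)
  have r1 : x ^ a * x * (y ^ b * v ^ c * w ^ d) = x ^ (a + 1) * y ^ b * v ^ c * w ^ d := by
    simp only [pow_succ, mul_assoc]
  have r2 : x ^ a * y ^ b * y * (v ^ c * w ^ d) = x ^ a * y ^ (b + 1) * v ^ c * w ^ d := by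
    simp only [pow_succ, mul_assoc]
  have r3 : x ^ a * y ^ b * v ^ c * v * (w ^ d) = x ^ a * y ^ b * v ^ (c + 1) * w ^ d := by
    simp only [pow_succ, mul_assoc]
  have t4 : m * (w * star w) * star m = (x ^ a * y ^ b * v ^ c * w ^ (d + 1)) *
      star (x ^ a * y ^ b * v ^ c * w ^ (d + 1)) := by
    have : x ^ a * y ^ b * v ^ c * w ^ (d + 1) = m * w := by rw [hm, pow_succ, mul_assoc _ _ w]
    rw [this, star_mul m w]; simp only [mul_assoc]
  rw [r1] at t1
  rw [r2] at t2
  rw [r3] at t3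
  rw [← t4, mul_smul, ← t1, mul_smul, ← t2, show -2 * (d : ℤ) = 2 * -(d : ℤ) by ring, ← t3]
  calc m * star m = m * 1 * star m := by rw [mul_one]
    _ = _ := by
      rw [← h1]
      simp only [mul_add, add_mul, mul_smul_comm, smul_mul_assoc]

end helpers

/-- For each `N`, the weighted sum of the monomials
`z₁^{j₁}(z₂*)^{j₂}(z₃*)^{j₃}z₄^{j₄}` times their adjoints, with weights
`c_{j₁,j₂,j₃,j₄}(N)` over all multi-indices with `j₁+j₂+j₃+j₄ = N`, equals `1`. -/
theorem coef_sum_eq_one {A : Type*} [Ring A] [Algebra ℂ A] [StarRing A]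
    (q : ℝ) (hq : q ∈ Set.Ioo (0 : ℝ) 1) (z₁ z₂ z₃ z₄ : A)
    (hVS : VSRel q ![z₁, z₂, z₃, z₄]) (N : ℕ) :
    ∑ j ∈ Finset.Nat.antidiagonalTuple 4 N,
      ((coef q N (j 0) (j 1) (j 2) (j 3) : ℝ) : ℂ) •
        ((z₁ ^ (j 0) * (star z₂) ^ (j 1) * (star z₃) ^ (j 2) * z₄ ^ (j 3)) *
          star (z₁ ^ (j 0) * (star z₂) ^ (j 1) * (star z₃) ^ (j 2) * z₄ ^ (j 3))) = 1 := by
  obtain ⟨hq0, hq1⟩ := hq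
  have hQ : (q : ℂ) ≠ 0 := by exact_mod_cast hq0.ne'
  have hQ2 : 1 - (q : ℂ) ^ 2 ≠ 0 := by
    have : (1 - q ^ 2 : ℝ) ≠ 0 := by nlinarith
    exact_mod_cast this
  obtain ⟨R1, R2, R3, R4⟩ := hVS
  have a12 : z₁ * z₂ = (q : ℂ) • (z₂ * z₁) := R1 0 1 (by decide)
  have a13 : z₁ * z₃ = (q : ℂ) • (z₃ * z₁) := R1 0 2 (by decide)
  have a14 : z₁ * z₄ = (q : ℂ) • (z₄ * z₁) := R1 0 3 (by decide)
  have a23 : z₂ * z₃ = (q : ℂ) • (z₃ * z₂) := R1 1 2 (by decide)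
  have a24 : z₂ * z₄ = (q : ℂ) • (z₄ * z₂) := R1 1 3 (by decide)
  have a34 : z₃ * z₄ = (q : ℂ) • (z₄ * z₃) := R1 2 3 (by decide)
  have b21 : star z₂ * z₁ = (q : ℂ) • (z₁ * star z₂) := R2 0 1 (by decide)
  have b31 : star z₃ * z₁ = (q : ℂ) • (z₁ * star z₃) := R2 0 2 (by decide)
  have b41 : star z₄ * z₁ = (q : ℂ) • (z₁ * star z₄) := R2 0 3 (by decide)
  have b42 : star z₄ * z₂ = (q : ℂ) • (z₂ * star z₄) := R2 1 3 (by decide)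
  have b43 : star z₄ * z₃ = (q : ℂ) • (z₃ * star z₄) := R2 2 3 (by decide)
  have b14 : star z₁ * z₄ = (q : ℂ) • (z₄ * star z₁) := R2 3 0 (by decide)
  have b24 : star z₂ * z₄ = (q : ℂ) • (z₄ * star z₂) := R2 3 1 (by decide)
  have b34 : star z₃ * z₄ = (q : ℂ) • (z₄ * star z₃) := R2 3 2 (by decide)
  have c2 : star z₂ * z₂ = z₂ * star z₂ + (1 - (q : ℂ) ^ 2) • (z₁ * star z₁) := by
    have h := R3 1
    rw [show Finset.Iio (1 : Fin 4) = {0} by decide] at h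
    simpa using h
  have c3 : star z₃ * z₃ = z₃ * star z₃ +
      (1 - (q : ℂ) ^ 2) • (z₁ * star z₁ + z₂ * star z₂) := by
    have h := R3 2
    rw [show Finset.Iio (2 : Fin 4) = {0, 1} by decide, Finset.sum_pair (by decide)] at h
    exact h
  have R4' : z₁ * star z₁ + z₂ * star z₂ + z₃ * star z₃ + z₄ * star z₄ = 1 := by
    rw [Fin.sum_univ_four] at R4
    exact R4
  have c4 : star z₄ * z₄ = z₄ * star z₄ +
      (1 - (q : ℂ) ^ 2) • (1 - z₄ * star z₄) := by
    have h := R3 3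
    rw [show Finset.Iio (3 : Fin 4) = {0, 1, 2} by decide, Finset.sum_insert (by decide),
      Finset.sum_pair (by decide)] at h
    have h' : star z₄ * z₄ = z₄ * star z₄ +
      (1 - (q : ℂ) ^ 2) • (z₁ * star z₁ + (z₂ * star z₂ + z₃ * star z₃)) := h
    rw [h', ← R4']
    congr 2
    abel
  have s1 := starC_fix hQ2 a14 b41 b14 c4
  have s2 := starC_fix_star (starC_fix hQ2 a24 b42 b24 c4)
  have s3 := starC_fix_star (starC_fix hQ2 a34 b43 b34 c4)
  have flip : ∀ x y : A, x * y = (q : ℂ) • (y * x) → y * x = (q : ℂ) ^ (-1 : ℤ) • (x * y) := by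
    intro x y h
    rw [h, zpow_neg_one, inv_smul_smul₀ hQ]
  have a32s : star z₃ * star z₂ = (q : ℂ) ^ (1 : ℤ) • (star z₂ * star z₃) := by
    rw [← star_mul, a23, star_smulC, star_mul, ← mul_assoc, s2, smul_mul_assoc, zpow_one]
  have one_eq : (q : ℂ) ^ 4 • (z₁ * star z₁) + (q : ℂ) ^ 2 • (star z₂ * star (star z₂))
      + star z₃ * star (star z₃) + z₄ * star z₄ = 1 := by
    rw [star_star, star_star, c2, c3, ← R4']
    module
  have key := step_term hQ z₁ (star z₂) (star z₃) z₄ s1 s2 s3 (by rw [b21, zpow_one])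
    (by rw [b31, zpow_one]) (flip _ _ a14) a32s (flip _ _ b24) (flip _ _ b34) one_eq
  induction N with
  | zero => rw [Finset.Nat.antidiagonalTuple_zero_right]; simp [coef]
  | succ N ih =>
    rw [← ih]
    simp only [coef, Complex.ofReal_add, add_smul, Finset.sum_add_distrib]
    rw [sum_shift N 0, sum_shift N 1, sum_shift N 2, sum_shift N 3]
    · rw [← Finset.sum_add_distrib, ← Finset.sum_add_distrib, ← Finset.sum_add_distrib]
      refine Finset.sum_congr rfl fun j _ => ?_
      rw [key (j 0) (j 1) (j 2) (j 3)]
      simp only [Pi.add_apply, Pi.single_apply]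
      simp
      module
    · intro j hj
      rw [coef_neg q N _ _ _ _ (by omega)]; simp
    · intro j hj
      rw [coef_neg q N _ _ _ _ (by omega)]; simp
    · intro j hj
      rw [coef_neg q N _ _ _ _ (by omega)]; simp
    · intro j hj
      rw [coef_neg q N _ _ _ _ (by omega)]; simp
end

section
/- Let A be a unital *-algebra over ℂ, q ∈ (0,1), and z₁, z₂, z₃, z₄ ∈ A elements satisfying the Vaksman–Soibelman S_q^7 relations. Then the 4×4 matrix P₁ over A given by rows (q⁴z₁*z₁, q³z₁*z₂*, q²z₁*z₃*, q²z₁*z₄), (q³z₂z₁, q²z₂z₂*, qz₂z₃*, qz₂z₄), (q²z₃z₁, qz₃z₂*, z₃z₃*, z₃z₄), (q²z₄*z₁, qz₄*z₂*, z₄*z₃*, z₄*z₄) is a projection: P₁² = P₁ and P₁* = P₁. -/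
/-- `x` is good when the central element `star q` acts on it as `q`. -/
def VSGood {A : Type*} [Ring A] [StarRing A] [Algebra ℂ A] (q : ℝ) (x : A) : Prop :=
  star (algebraMap ℂ A (q : ℂ)) * x = algebraMap ℂ A (q : ℂ) * x

section helpers
variable {A : Type*} [Ring A] [StarRing A] [Algebra ℂ A] {q : ℝ}

theorem vs_central (c : ℂ) (x : A) :
    star (algebraMap ℂ A c) * x = x * star (algebraMap ℂ A c) := by
  have h := congrArg star (Algebra.commutes c (star x))
  simp only [star_mul, star_star] at h
  exact h.symm

theorem VSGood.mul_right {x : A} (h : VSGood q x) (y : A) : VSGood q (x * y) := by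
  unfold VSGood at *
  rw [← mul_assoc, h, mul_assoc]

theorem VSGood.mul_left {x : A} (h : VSGood q x) (y : A) : VSGood q (y * x) := by
  unfold VSGood at *
  rw [← mul_assoc, vs_central, mul_assoc, h, ← mul_assoc, ← Algebra.commutes, mul_assoc]

theorem VSGood.add {x y : A} (h : VSGood q x) (h' : VSGood q y) : VSGood q (x + y) := by
  unfold VSGood at *
  rw [mul_add, mul_add, h, h']

theorem VSGood.smul {x : A} (h : VSGood q x) (c : ℂ) : VSGood q (c • x) := by
  rw [Algebra.smul_def]
  exact h.mul_left _

theorem VSGood.star {x : A} (h : VSGood q x) : VSGood q (star x) := by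
  unfold VSGood at *
  have h := congrArg Star.star h
  simp only [star_mul, star_star] at h
  rw [vs_central, ← h, Algebra.commutes]

theorem VSGood.star_pow_smul {x : A} (h : VSGood q x) (n : ℕ) :
    Star.star (((q : ℂ) ^ n) • x) = ((q : ℂ) ^ n) • Star.star x := by
  induction n with
  | zero => simp
  | succ n ih =>
    have e : ((q : ℂ) ^ (n + 1)) • x = algebraMap ℂ A (q : ℂ) * (((q : ℂ) ^ n) • x) := by
      rw [← Algebra.smul_def, smul_smul, pow_succ']
    rw [e, star_mul, ih, ← vs_central, (h.star.smul _ : _ = _), ← Algebra.smul_def, smul_smul,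
      pow_succ']

theorem VSGood.star_smul {x : A} (h : VSGood q x) :
    Star.star ((q : ℂ) • x) = (q : ℂ) • Star.star x := by
  simpa using h.star_pow_smul 1

variable {z : Fin 4 → A}

theorem vs_good1 (h : VSRel q z) {i j : Fin 4} (hij : i ≠ j) :
    VSGood q (z j * star (z i)) := by
  have h1 := congrArg star (h.2.1 i j hij)
  have h2 := h.2.1 j i hij.symm
  rw [star_mul, star_star, h2, Algebra.smul_def, Algebra.smul_def, star_mul, star_mul, star_star,
    ← vs_central] at h1
  exact h1.symm

theorem vs_good2 (h : VSRel q z) {i j : Fin 4} (hij : i ≠ j) :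
    VSGood q (star (z j) * z i) := by
  rw [h.2.1 i j hij]
  exact (vs_good1 h hij.symm).smul _

theorem vs_comm (h : VSRel q z) (hq : q ≠ 0) {i j : Fin 4} (hij : i ≠ j) :
    ∃ c : ℂ, z i * z j = c • (z j * z i) := by
  rcases lt_or_gt_of_ne hij with hl | hl
  · exact ⟨_, h.1 i j hl⟩
  · refine ⟨(q : ℂ)⁻¹, ?_⟩
    rw [h.1 j i hl, smul_smul, inv_mul_cancel₀ (by exact_mod_cast hq), one_smul]

theorem vs_good3 (h : VSRel q z) (hq : q ≠ 0) {i j : Fin 4} (hij : i ≠ j) :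
    VSGood q (z i * z j) := by
  have key : ∀ k, VSGood q (z k * star (z k) * (z i * z j)) := by
    intro k
    by_cases hk : i = k
    · subst hk
      obtain ⟨c, hc⟩ := vs_comm h hq hij
      rw [hc, mul_smul_comm, mul_assoc, ← mul_assoc (star (z i))]
      exact (((vs_good2 h hij.symm).mul_right _).mul_left _).smul _
    · rw [mul_assoc, ← mul_assoc (star (z k))]
      exact ((vs_good2 h hk).mul_right _).mul_left _
  rw [← one_mul (z i * z j), ← h.2.2.2, Fin.sum_univ_four, add_mul, add_mul, add_mul]
  exact (((key 0).add (key 1)).add (key 2)).add (key 3)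

theorem vs_diag {x y w : A} (hx : star x = x) (hy : star y = y) (hw : star w = w)
    (e : x = y + (1 - (q : ℂ) ^ 2) • w) :
    star (((q : ℂ) ^ 2) • w) = ((q : ℂ) ^ 2) • w := by
  have h := congrArg star e
  rw [hx, sub_smul, one_smul, star_add, star_sub, hy, hw] at h
  rw [sub_smul, one_smul] at e
  rw [e] at h
  exact (sub_right_injective (add_left_cancel h)).symm

end helpers

set_option maxHeartbeats 4000000 in
/-- The explicit 4×4 matrix `P₁` over the quantum 7-sphere algebra is a projection. -/
theorem P1_isProjection {A : Type*} [Ring A] [Algebra ℂ A] [StarRing A]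
    (q : ℝ) (hq : q ∈ Set.Ioo (0 : ℝ) 1) (z₁ z₂ z₃ z₄ : A)
    (hVS : VSRel q ![z₁, z₂, z₃, z₄]) :
    ∀ P₁ : Matrix (Fin 4) (Fin 4) A,
      P₁ = !![((q : ℂ) ^ 4) • (star z₁ * z₁), ((q : ℂ) ^ 3) • (star z₁ * star z₂),
              ((q : ℂ) ^ 2) • (star z₁ * star z₃), ((q : ℂ) ^ 2) • (star z₁ * z₄);
            ((q : ℂ) ^ 3) • (z₂ * z₁), ((q : ℂ) ^ 2) • (z₂ * star z₂),
              (q : ℂ) • (z₂ * star z₃), (q : ℂ) • (z₂ * z₄);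
            ((q : ℂ) ^ 2) • (z₃ * z₁), (q : ℂ) • (z₃ * star z₂),
              z₃ * star z₃, z₃ * z₄;
            ((q : ℂ) ^ 2) • (star z₄ * z₁), (q : ℂ) • (star z₄ * star z₂),
              star z₄ * star z₃, star z₄ * z₄] →
      P₁ * P₁ = P₁ ∧ Matrix.conjTranspose P₁ = P₁ := by
  have hq0 : q ≠ 0 := hq.1.ne'
  have hS := hVS.2.2.2
  have k1 := hVS.2.2.1 0
  have k2 := hVS.2.2.1 1
  have k3 := hVS.2.2.1 2
  have i0 : Finset.Iio (0 : Fin 4) = ∅ := by decide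
  have i1 : Finset.Iio (1 : Fin 4) = {0} := by decide
  have i2 : Finset.Iio (2 : Fin 4) = {0, 1} := by decide
  rw [i0] at k1
  rw [i1] at k2
  rw [i2, Finset.sum_pair (by decide)] at k3
  simp [Fin.sum_univ_four] at hS k1 k2 k3
  have g12 : VSGood q (z₂ * z₁) := vs_good3 hVS hq0 (i := 1) (j := 0) (by decide)
  have g13 : VSGood q (z₃ * z₁) := vs_good3 hVS hq0 (i := 2) (j := 0) (by decide)
  have g24 : VSGood q (z₂ * z₄) := vs_good3 hVS hq0 (i := 1) (j := 3) (by decide)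
  have g14 : VSGood q (star z₄ * z₁) := vs_good2 hVS (i := 0) (j := 3) (by decide)
  have g23 : VSGood q (z₃ * star z₂) := vs_good1 hVS (i := 1) (j := 2) (by decide)
  have d1 := vs_diag (IsSelfAdjoint.star_mul_self z₂) (IsSelfAdjoint.mul_star_self z₂) (IsSelfAdjoint.mul_star_self z₁) k2
  rw [← smul_add] at k3
  have d12 := vs_diag (IsSelfAdjoint.star_mul_self z₃) (IsSelfAdjoint.mul_star_self z₃) ((IsSelfAdjoint.mul_star_self z₁).add (IsSelfAdjoint.mul_star_self z₂)) k3
  have d2 : star (((q : ℂ) ^ 2) • (z₂ * star z₂)) = ((q : ℂ) ^ 2) • (z₂ * star z₂) := by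
    rw [smul_add, star_add, d1] at d12
    exact add_left_cancel d12
  have d1' : star (((q : ℂ) ^ 4) • (z₁ * star z₁)) = ((q : ℂ) ^ 4) • (z₁ * star z₁) := by
    have e : ∀ x : A, ((q : ℂ) ^ 4) • x
        = algebraMap ℂ A ((q : ℂ) ^ 2) * (((q : ℂ) ^ 2) • x) := by
      intro x
      rw [← Algebra.smul_def, smul_smul]
      congr 1
      ring
    have d1s : star (algebraMap ℂ A ((q : ℂ) ^ 2)) * (z₁ * star z₁)
        = ((q : ℂ) ^ 2) • (z₁ * star z₁) := by
      rw [← d1, Algebra.smul_def, star_mul, ← vs_central]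
      simp
    rw [e, star_mul, d1, ← vs_central, mul_smul_comm, d1s, ← Algebra.smul_def]
  have hba : ((q : ℂ) ^ 4) • (z₁ * star z₁) + ((q : ℂ) ^ 2) • (star z₂ * z₂)
      + star z₃ * z₃ + z₄ * star z₄ = 1 := by
    rw [k2, k3, ← hS]
    module
  intro P hP
  constructor
  · let a : Fin 4 → A := ![((q : ℂ) ^ 2) • star z₁, (q : ℂ) • z₂, z₃, star z₄]
    let b : Fin 4 → A := ![((q : ℂ) ^ 2) • z₁, (q : ℂ) • star z₂, star z₃, z₄]
    have hP' : ∀ i j, P i j = a i * b j := by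
      intro i j
      rw [hP]
      fin_cases i <;> fin_cases j <;> simp [a, b, smul_smul] <;> module
    have hs : ∑ k, b k * a k = 1 := by
      rw [← hba, Fin.sum_univ_four]
      simp [a, b, smul_smul]
      module
    ext i j
    rw [Matrix.mul_apply, hP']
    calc ∑ k, P i k * P k j = ∑ k, a i * (b k * a k) * b j := by
          refine Finset.sum_congr rfl fun k _ => ?_
          rw [hP', hP']
          simp only [mul_assoc]
      _ = a i * b j := by rw [← Finset.sum_mul, ← Finset.mul_sum, hs, mul_one]
  · ext i j
    rw [Matrix.conjTranspose_apply, hP]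
    have s12 := g12.star.star_pow_smul 3
    have s13 := g13.star.star_pow_smul 2
    have s14 := g14.star.star_pow_smul 2
    have s23 := g23.star.star_smul
    have s24 := g24.star.star_smul
    have t12 := g12.star_pow_smul 3
    have t13 := g13.star_pow_smul 2
    have t14 := g14.star_pow_smul 2
    have t23 := g23.star_smul
    have t24 := g24.star_smul
    simp only [star_mul, star_star] at s12 s13 s14 s23 s24 t12 t13 t14 t23 t24
    rw [← k1] at d1'
    fin_cases i <;> fin_cases j <;> simp <;> assumption
end

section
/- Let A be a unital *-algebra over ℂ, q ∈ (0,1), and z₁, z₂, z₃, z₄ ∈ A elements satisfying the Vaksman–Soibelman S_q^7 relations. Set a = z₁z₄* − z₂z₃*, b = z₁z₃ + q⁻¹z₂z₄, and R = z₁z₁* + z₂z₂*. Then: Ra = q⁻²aR, Rb = q²bR, ab = q³ba, ab* = q⁻¹b*a, aa* + q²bb* = R(1−q²R), aa* = q²a*a + (1−q²)R², and b*b = q⁴bb* + (1−q²)R. -/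
set_option linter.unusedSimpArgs false

theorem assoc_of {A : Type*} [Ring A] {x y r : A} (h : x * y = r) (w : A) :
    x * (y * w) = r * w := by rw [← mul_assoc, h]

set_option maxHeartbeats 4000000 in
theorem core {A : Type*} [Ring A] [Algebra ℂ A] (q : ℝ) (hq : (q : ℂ) ≠ 0)
    (z₁ z₂ z₃ z₄ s₁ s₂ s₃ s₄ : A)
    (h12 : z₁ * z₂ = (q:ℂ) • (z₂ * z₁))
    (t12 : s₂ * s₁ = (q:ℂ) • (s₁ * s₂))
    (h13 : z₁ * z₃ = (q:ℂ) • (z₃ * z₁))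
    (t13 : s₃ * s₁ = (q:ℂ) • (s₁ * s₃))
    (h14 : z₁ * z₄ = (q:ℂ) • (z₄ * z₁))
    (t14 : s₄ * s₁ = (q:ℂ) • (s₁ * s₄))
    (h23 : z₂ * z₃ = (q:ℂ) • (z₃ * z₂))
    (t23 : s₃ * s₂ = (q:ℂ) • (s₂ * s₃))
    (h24 : z₂ * z₄ = (q:ℂ) • (z₄ * z₂))
    (t24 : s₄ * s₂ = (q:ℂ) • (s₂ * s₄))
    (h34 : z₃ * z₄ = (q:ℂ) • (z₄ * z₃))
    (t34 : s₄ * s₃ = (q:ℂ) • (s₃ * s₄))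
    (m21 : s₂ * z₁ = (q:ℂ) • (z₁ * s₂))
    (m31 : s₃ * z₁ = (q:ℂ) • (z₁ * s₃))
    (m41 : s₄ * z₁ = (q:ℂ) • (z₁ * s₄))
    (m12 : s₁ * z₂ = (q:ℂ) • (z₂ * s₁))
    (m32 : s₃ * z₂ = (q:ℂ) • (z₂ * s₃))
    (m42 : s₄ * z₂ = (q:ℂ) • (z₂ * s₄))
    (m13 : s₁ * z₃ = (q:ℂ) • (z₃ * s₁))
    (m23 : s₂ * z₃ = (q:ℂ) • (z₃ * s₂))
    (m43 : s₄ * z₃ = (q:ℂ) • (z₃ * s₄))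
    (m14 : s₁ * z₄ = (q:ℂ) • (z₄ * s₁))
    (m24 : s₂ * z₄ = (q:ℂ) • (z₄ * s₂))
    (m34 : s₃ * z₄ = (q:ℂ) • (z₄ * s₃))
    (d1 : s₁ * z₁ = z₁ * s₁)
    (d2 : s₂ * z₂ = z₂ * s₂ + (1 - (q:ℂ)^2) • (z₁ * s₁))
    (d3 : s₃ * z₃ = z₃ * s₃ + (1 - (q:ℂ)^2) • (z₁ * s₁ + z₂ * s₂))
    (d4 : s₄ * z₄ = z₄ * s₄ + (1 - (q:ℂ)^2) • (z₁ * s₁ + z₂ * s₂ + z₃ * s₃))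
    (e : z₁ * s₁ = 1 - z₂ * s₂ - z₃ * s₃ - z₄ * s₄)
    (a b R a' b' : A)
    (ha : a = z₁ * s₄ - z₂ * s₃)
    (hb : b = z₁ * z₃ + (q : ℂ)⁻¹ • (z₂ * z₄))
    (hR : R = z₁ * s₁ + z₂ * s₂)
    (ha' : a' = z₄ * s₁ - z₃ * s₂)
    (hb' : b' = s₃ * s₁ + (q : ℂ)⁻¹ • (s₄ * s₂)) :
      R * a = (((q : ℂ) ^ 2)⁻¹) • (a * R) ∧
      R * b = ((q : ℂ) ^ 2) • (b * R) ∧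
      a * b = ((q : ℂ) ^ 3) • (b * a) ∧
      a * b' = ((q : ℂ)⁻¹) • (b' * a) ∧
      a * a' + ((q : ℂ) ^ 2) • (b * b') = R * (1 - ((q : ℂ) ^ 2) • R) ∧
      a * a' = ((q : ℂ) ^ 2) • (a' * a) + (1 - (q : ℂ) ^ 2) • R ^ 2 ∧
      b' * b = ((q : ℂ) ^ 4) • (b * b') + (1 - (q : ℂ) ^ 2) • R := by
  have gh12 := assoc_of h12
  have gt12 := assoc_of t12
  have gh13 := assoc_of h13
  have gt13 := assoc_of t13
  have gh14 := assoc_of h14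
  have gt14 := assoc_of t14
  have gh23 := assoc_of h23
  have gt23 := assoc_of t23
  have gh24 := assoc_of h24
  have gt24 := assoc_of t24
  have gh34 := assoc_of h34
  have gt34 := assoc_of t34
  have gm21 := assoc_of m21
  have gm31 := assoc_of m31
  have gm41 := assoc_of m41
  have gm12 := assoc_of m12
  have gm32 := assoc_of m32
  have gm42 := assoc_of m42
  have gm13 := assoc_of m13
  have gm23 := assoc_of m23
  have gm43 := assoc_of m43
  have gm14 := assoc_of m14
  have gm24 := assoc_of m24
  have gm34 := assoc_of m34
  have gd1 := assoc_of d1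
  have gd2 := assoc_of d2
  have gd3 := assoc_of d3
  have gd4 := assoc_of d4
  have ge := assoc_of e
  rw [pow_two R]
  subst ha hb hR ha' hb'
  refine ⟨?_, ?_, ?_, ?_, ?_, ?_, ?_⟩ <;>
  · simp only [mul_add, add_mul, mul_sub, sub_mul, smul_mul_assoc, mul_smul_comm, smul_add, smul_sub, smul_smul, mul_assoc, mul_one, one_mul, h12, t12, h13, t13, h14, t14, h23, t23, h24, t24, h34, t34, m21, m31, m41, m12, m32, m42, m13, m23, m43, m14, m24, m34, d1, d2, d3, d4, gh12, gt12, gh13, gt13, gh14, gt14, gh23, gt23, gh24, gt24, gh34, gt34, gm21, gm31, gm41, gm12, gm32, gm42, gm13, gm23, gm43, gm14, gm24, gm34, gd1, gd2, gd3, gd4, e, ge]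
    match_scalars <;> field_simp <;> ring

theorem killer {A : Type*} [Ring A] [Algebra ℂ A] [StarRing A]
    (q : ℝ) (hq : q ∈ Set.Ioo (0 : ℝ) 1) (z : Fin 4 → A) (h : VSRel q z) :
    ∃ p : A, star (algebraMap ℂ A q) = algebraMap ℂ A q + p ∧ star p = -p ∧
      (∀ x, p * x = x * p) ∧ ∀ i : Fin 4, i ≠ 3 → p * z i = 0 := by
  obtain ⟨h1, h2, h3, h4⟩ := h
  have hq0 : (q : ℂ) ≠ 0 := by exact_mod_cast hq.1.ne'
  have hq1 : (1 - (q : ℂ) ^ 2) ≠ 0 := by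
    have : (1 - q ^ 2 : ℝ) ≠ 0 := by nlinarith [hq.1, hq.2]
    exact_mod_cast this
  have cen : ∀ x, (star (algebraMap ℂ A q) - algebraMap ℂ A q) * x
      = x * (star (algebraMap ℂ A q) - algebraMap ℂ A q) := by
    intro x
    have := congrArg star (Algebra.commutes (q : ℂ) (star x))
    simp only [star_mul, star_star] at this
    rw [sub_mul, mul_sub, Algebra.commutes (q : ℂ) x, this]
  refine ⟨star (algebraMap ℂ A q) - algebraMap ℂ A q, by abel, by simp, cen, ?_⟩
  have kd : ∀ i j, i ≠ j →
      (star (algebraMap ℂ A q) - algebraMap ℂ A q) * (z i * star (z j)) = 0 := by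
    intro i j hij
    have e1 := h2 i j hij
    have e2 := congrArg star (h2 j i hij.symm)
    rw [Algebra.smul_def] at e1 e2
    simp only [star_mul, star_star] at e2
    rw [cen, mul_sub, ← Algebra.commutes, ← e1, e2, sub_self]
  generalize star (algebraMap ℂ A q) - algebraMap ℂ A q = p at cen kd
  have k1 : ∀ i k, i ≠ k → p * (z i * (z k * star (z k))) = 0 := by
    intro i k hik
    rcases lt_or_gt_of_ne hik with hlt | hlt
    · rw [← mul_assoc (z i), h1 i k hlt, smul_mul_assoc, mul_smul_comm, mul_assoc (z k),
        ← mul_assoc p, cen, mul_assoc, kd i k hik, mul_zero, smul_zero]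
    · have := h1 k i hlt
      have e : z i * z k = (q : ℂ)⁻¹ • (z k * z i) := by
        rw [this, smul_smul, inv_mul_cancel₀ hq0, one_smul]
      rw [← mul_assoc (z i), e, smul_mul_assoc, mul_smul_comm, mul_assoc (z k),
        ← mul_assoc p, cen, mul_assoc, kd i k hik, mul_zero, smul_zero]
  have k2 : ∀ i k, i < k → p * (z i * (z i * star (z i))) = 0 := by
    intro i k hik
    have e := congrArg (fun x => p * (z i * x)) (h3 k)
    simp only [mul_add, mul_smul_comm] at e
    rw [← mul_assoc (z i), ← mul_assoc p, kd i k hik.ne, zero_mul, k1 i k hik.ne, zero_add,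
      Finset.mul_sum, Finset.mul_sum, Finset.sum_eq_single i] at e
    · exact (smul_eq_zero_iff_right hq1).1 e.symm
    · intro j _ hj
      exact k1 i j hj.symm
    · intro hn
      exact absurd (Finset.mem_Iio.2 hik) hn
  intro i hi
  have hi3 : i < 3 := by omega
  have : p * z i = p * (z i * ∑ k : Fin 4, z k * star (z k)) := by rw [h4, mul_one]
  rw [this, Finset.mul_sum, Finset.mul_sum]
  apply Finset.sum_eq_zero
  intro k _
  by_cases hk : i = k
  · subst hk
    exact k2 i 3 hi3
  · exact k1 i k hk

/-- star of a scalar multiple of something killed by `p`. -/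
theorem star_q {A : Type*} [Ring A] [Algebra ℂ A] [StarRing A] (q : ℂ) (p : A)
    (hp : star (algebraMap ℂ A q) = algebraMap ℂ A q + p) (hc : ∀ x, p * x = x * p)
    (hs : star p = -p) (x : A) (hx : p * x = 0) : star (q • x) = q • star x := by
  have h0 : star x * p = 0 := by
    have := congrArg star hx
    simpa [hs] using this
  rw [Algebra.smul_def, star_mul, hp, mul_add, h0, add_zero, Algebra.smul_def, Algebra.commutes]

/-- The generators `a = z₁z₄* - z₂z₃*`, `b = z₁z₃ + q⁻¹z₂z₄`, `R = z₁z₁* + z₂z₂*` of the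
quantum 4-sphere satisfy the relations of Bonechi–Ciccoli–Tarlini. -/
theorem quantum4Sphere_relations {A : Type*} [Ring A] [Algebra ℂ A] [StarRing A]
    (q : ℝ) (hq : q ∈ Set.Ioo (0 : ℝ) 1) (z₁ z₂ z₃ z₄ : A)
    (hVS : VSRel q ![z₁, z₂, z₃, z₄]) :
    ∀ a b R : A,
      a = z₁ * star z₄ - z₂ * star z₃ →
      b = z₁ * z₃ + (q : ℂ)⁻¹ • (z₂ * z₄) →
      R = z₁ * star z₁ + z₂ * star z₂ →
      R * a = (((q : ℂ) ^ 2)⁻¹) • (a * R) ∧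
      R * b = ((q : ℂ) ^ 2) • (b * R) ∧
      a * b = ((q : ℂ) ^ 3) • (b * a) ∧
      a * star b = ((q : ℂ)⁻¹) • (star b * a) ∧
      a * star a + ((q : ℂ) ^ 2) • (b * star b) = R * (1 - ((q : ℂ) ^ 2) • R) ∧
      a * star a = ((q : ℂ) ^ 2) • (star a * a) + (1 - (q : ℂ) ^ 2) • R ^ 2 ∧
      star b * b = ((q : ℂ) ^ 4) • (b * star b) + (1 - (q : ℂ) ^ 2) • R := by
  intro a b R ha hb hR
  obtain ⟨p, hp, hs, hc, hk⟩ := killer q hq _ hVS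
  have hq0 : (q : ℂ) ≠ 0 := by exact_mod_cast hq.1.ne'
  have k1 : p * z₁ = 0 := hk 0 (by decide)
  have k2 : p * z₂ = 0 := hk 1 (by decide)
  have k3 : p * z₃ = 0 := hk 2 (by decide)
  have kl : ∀ x y, p * y = 0 → p * (x * y) = 0 := by
    intro x y h
    rw [← mul_assoc, hc, mul_assoc, h, mul_zero]
  have kr : ∀ x y, p * x = 0 → p * (x * y) = 0 := by
    intro x y h
    rw [← mul_assoc, h, zero_mul]
  have sq := star_q (q : ℂ) p hp hc hs
  obtain ⟨h1, h2, h3, h4⟩ := hVS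
  have e4 : z₁ * star z₁ + z₂ * star z₂ + z₃ * star z₃ + z₄ * star z₄ = 1 := by
    simpa [Fin.sum_univ_four] using h4
  have h12 : z₁ * z₂ = (q : ℂ) • (z₂ * z₁) := h1 0 1 (by decide)
  have t12 : star z₂ * star z₁ = (q : ℂ) • (star z₁ * star z₂) := by
    rw [← star_mul, h12, sq _ (kl _ _ k1), star_mul]
  have h13 : z₁ * z₃ = (q : ℂ) • (z₃ * z₁) := h1 0 2 (by decide)
  have t13 : star z₃ * star z₁ = (q : ℂ) • (star z₁ * star z₃) := by
    rw [← star_mul, h13, sq _ (kl _ _ k1), star_mul]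
  have h14 : z₁ * z₄ = (q : ℂ) • (z₄ * z₁) := h1 0 3 (by decide)
  have t14 : star z₄ * star z₁ = (q : ℂ) • (star z₁ * star z₄) := by
    rw [← star_mul, h14, sq _ (kl _ _ k1), star_mul]
  have h23 : z₂ * z₃ = (q : ℂ) • (z₃ * z₂) := h1 1 2 (by decide)
  have t23 : star z₃ * star z₂ = (q : ℂ) • (star z₂ * star z₃) := by
    rw [← star_mul, h23, sq _ (kl _ _ k2), star_mul]
  have h24 : z₂ * z₄ = (q : ℂ) • (z₄ * z₂) := h1 1 3 (by decide)
  have t24 : star z₄ * star z₂ = (q : ℂ) • (star z₂ * star z₄) := by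
    rw [← star_mul, h24, sq _ (kl _ _ k2), star_mul]
  have h34 : z₃ * z₄ = (q : ℂ) • (z₄ * z₃) := h1 2 3 (by decide)
  have t34 : star z₄ * star z₃ = (q : ℂ) • (star z₃ * star z₄) := by
    rw [← star_mul, h34, sq _ (kl _ _ k3), star_mul]
  have d1 : star z₁ * z₁ = z₁ * star z₁ := by
    have h := h3 0
    rw [show Finset.Iio (0 : Fin 4) = ∅ by decide] at h
    simpa [add_assoc] using h
  have d2 : star z₂ * z₂ = z₂ * star z₂ + (1 - (q : ℂ) ^ 2) • (z₁ * star z₁) := by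
    have h := h3 1
    rw [show Finset.Iio (1 : Fin 4) = {0} by decide] at h
    simpa [add_assoc] using h
  have d3 : star z₃ * z₃ = z₃ * star z₃ + (1 - (q : ℂ) ^ 2) • (z₁ * star z₁ + z₂ * star z₂) := by
    have h := h3 2
    rw [show Finset.Iio (2 : Fin 4) = {0, 1} by decide] at h
    simpa [add_assoc] using h
  have d4 : star z₄ * z₄ = z₄ * star z₄ + (1 - (q : ℂ) ^ 2) • (z₁ * star z₁ + z₂ * star z₂ + z₃ * star z₃) := by
    have h := h3 3
    rw [show Finset.Iio (3 : Fin 4) = {0, 1, 2} by decide] at h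
    simpa [add_assoc] using h
  have hb' : star b = star z₃ * star z₁ + (q : ℂ)⁻¹ • (star z₄ * star z₂) := by
    have e : star ((q : ℂ)⁻¹ • (z₂ * z₄)) = (q : ℂ)⁻¹ • star (z₂ * z₄) := by
      have := sq ((q : ℂ)⁻¹ • (z₂ * z₄)) (by rw [mul_smul_comm, kr _ _ k2, smul_zero])
      rw [smul_smul, mul_inv_cancel₀ hq0, one_smul] at this
      rw [this, smul_smul, inv_mul_cancel₀ hq0, one_smul]
    rw [hb, star_add, e, star_mul, star_mul]
  exact core q hq0 z₁ z₂ z₃ z₄ (star z₁) (star z₂) (star z₃) (star z₄)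
    h12 t12 h13 t13 h14 t14 h23 t23 h24 t24 h34 t34 (h2 0 1 (by decide)) (h2 0 2 (by decide)) (h2 0 3 (by decide)) (h2 1 0 (by decide)) (h2 1 2 (by decide)) (h2 1 3 (by decide)) (h2 2 0 (by decide)) (h2 2 1 (by decide)) (h2 2 3 (by decide)) (h2 3 0 (by decide)) (h2 3 1 (by decide)) (h2 3 2 (by decide)) d1 d2 d3 d4
    (by rw [← e4]; abel) a b R (star a) (star b) ha hb hR (by simp [ha]) hb'
end

section
/- Let q ∈ (0,1) be a real number. Then the series over m ∈ ℕ with terms 1 − (2 + q⁻² − q²)·q^{2(m+1)}·(1 − q^{2(m+1)}) − (1 − q^{2(m+1)})² − q^{4m} is summable, and its sum equals −2. -/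
/-- The index-pairing series
`∑_{m≥0} (1 - (2 + q⁻² - q²) q^{2(m+1)} (1 - q^{2(m+1)}) - (1 - q^{2(m+1)})² - q^{4m})`
is summable with sum `-2`, for `q ∈ (0,1)`. -/
theorem indexPairing_series_hasSum (q : ℝ) (hq : q ∈ Set.Ioo (0 : ℝ) 1) :
    HasSum
      (fun m : ℕ =>
        1 - (2 + (q ^ 2)⁻¹ - q ^ 2) * q ^ (2 * (m + 1)) * (1 - q ^ (2 * (m + 1)))
          - (1 - q ^ (2 * (m + 1))) ^ 2 - q ^ (4 * m))
      (-2 : ℝ) := by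
  obtain ⟨h0, h1⟩ := hq
  have hx0 : 0 < q ^ 2 := by positivity
  have hx1 : q ^ 2 < 1 := by nlinarith
  have hy0 : 0 ≤ (q ^ 2) ^ 2 := by positivity
  have hy1 : (q ^ 2) ^ 2 < 1 := by nlinarith
  have A := (hasSum_geometric_of_lt_one hx0.le hx1).mul_left ((q ^ 2) ^ 2 - 1)
  have B := (hasSum_geometric_of_lt_one hy0 hy1).mul_left
    ((1 - (q ^ 2) ^ 2) * (q ^ 2 - 1))
  have C := A.add B
  have hne : q ≠ 0 := h0.ne'
  have e1 : (1 - q ^ 2) ≠ 0 := by linarith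
  have e2 : (1 - (q ^ 2) ^ 2) ≠ 0 := by linarith
  convert C using 1
  · rfl
  · funext m
    have p1 : q ^ (2 * (m + 1)) = q ^ 2 * (q ^ 2) ^ m := by
      rw [pow_mul, pow_succ, mul_comm]
    have p2 : q ^ (4 * m) = ((q ^ 2) ^ m) ^ 2 := by
      rw [← pow_mul, ← pow_mul]; congr 1; ring
    have p3 : ((q ^ 2) ^ 2) ^ m = ((q ^ 2) ^ m) ^ 2 := by
      rw [pow_right_comm]
    rw [p1, p2, p3]
    generalize (q ^ 2) ^ m = y
    field_simp
    ring
  · have h3 : (1 - (q ^ 2) ^ 2) * (q ^ 2 - 1) * (1 - (q ^ 2) ^ 2)⁻¹ = q ^ 2 - 1 := by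
      rw [mul_right_comm, mul_inv_cancel₀ e2, one_mul]
    have h4 : ((q ^ 2) ^ 2 - 1) * (1 - q ^ 2)⁻¹ = -(1 + q ^ 2) := by
      rw [← div_eq_mul_inv, div_eq_iff e1]; ring
    rw [h3, h4]; ring
end
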